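/- arXiv:1401.4698 — 3 statements merged into one kernel-verified Lean document; each statement's English description precedes it below -/
import Mathlib

section
/- Let 1 < p < ∞, p* = max(p, p/(p−1)), and let H be a real Hilbert space. Let X = H × H, let Z = Option (H × H) with the extra point Δ (= none), and define φ : Z × X → Z by φ(Δ, d) = Δ and, for z = (x₁,x₂) and d = (d₁,d₂), φ(z,d) = Δ if |d₂| > |d₁| and φ(z,d) = (x₁+d₁, x₂+d₂) otherwise. Define f(Δ) = −∞, f(x₁,x₂) = |x₂|^p − (p*−1)^p |x₁|^p, and ũ(Δ) = −∞, ũ(x₁,x₂) = p (1 − 1/p*)^{p−1} (|x₂| − (p*−1)|x₁|) (|x₁| + |x₂|)^{p−1}. Then the minimal fixed point of A dominating f is A^∞f = u, where, for 1 < p ≤ 2: u(Δ) = −∞, u(x₁,x₂) = ũ(x₁,x₂) if |x₂| ≤ (p*−1)|x₁| and u(x₁,x₂) = f(x₁,x₂) if |x₂| > (p*−1)|x₁|; and for 2 ≤ p < ∞ the same formula with ũ and f interchanged (u = f on {|x₂| ≤ (p*−1)|x₁|}, u = ũ on {|x₂| > (p*−1)|x₁|}). -/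
/-- An `EReal`-valued function on a real vector space is concave
(with the convention `⊤ + ⊥ = ⊥` of `EReal`). -/
def IsEConcave {X : Type*} [AddCommGroup X] [Module ℝ X] (ψ : X → EReal) : Prop :=
  ∀ x y : X, ∀ a b : ℝ, 0 ≤ a → 0 ≤ b → a + b = 1 →
    (a : EReal) * ψ x + (b : EReal) * ψ y ≤ ψ (a • x + b • y)

/-- The concave envelope `g^♯` of `g : X → EReal`: the pointwise infimum of all
concave functions dominating `g`. -/
noncomputable def concaveEnvelope {X : Type*} [AddCommGroup X] [Module ℝ X]
    (g : X → EReal) (x : X) : EReal :=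
  ⨅ ψ : {ψ : X → EReal // IsEConcave ψ ∧ ∀ y, g y ≤ ψ y}, ψ.1 x

/-- The operator `A`: `Ag(z) = (g ∘ φ(z,·))^♯(0)`. -/
noncomputable def Aop {X Z : Type*} [AddCommGroup X] [Module ℝ X]
    (φ : Z → X → Z) (g : Z → EReal) : Z → EReal :=
  fun z => concaveEnvelope (fun d => g (φ z d)) 0

/-- The update map for differentially subordinate martingales on the state space
`Z = (H × H) ∪ {Δ}` (with `Δ = none` a cemetery state): paths whose increment violates
`|d₂| ≤ |d₁|` are sent to `Δ`. -/
noncomputable def burkPhi {H : Type*} [NormedAddCommGroup H] [InnerProductSpace ℝ H] :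
    Option (H × H) → H × H → Option (H × H) :=
  fun z d => match z with
    | none => none
    | some w => if ‖d.2‖ > ‖d.1‖ then none else some (w.1 + d.1, w.2 + d.2)


noncomputable section BurkAux

def bkF (p s t : ℝ) : ℝ := t ^ p - (p - 1) ^ p * s ^ p
def bkc (p : ℝ) : ℝ := p ^ (2 - p) * (p - 1) ^ (p - 1)
def bkP (p s t : ℝ) : ℝ := bkc p * ((s + t) ^ p - p * s * (s + t) ^ (p - 1))
def bkAF (p s : ℝ) : ℝ := -(p * (p - 1) ^ p) * s ^ (p - 2)
def bkBF (p t : ℝ) : ℝ := p * t ^ (p - 2)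
def bkAP (p s t : ℝ) : ℝ := -(bkc p * p * (p - 1)) * (s + t) ^ (p - 2)
def bkBP (p s t : ℝ) : ℝ := bkc p * p * (s + t) ^ (p - 2) * (1 - (p - 2) * s / t)

lemma bkc_pos {p : ℝ} (hp : 1 < p) : 0 < bkc p := by
  unfold bkc
  have : 0 < p - 1 := by linarith
  positivity

/-- key algebraic identity for the constant -/
lemma bkc_mul {p : ℝ} (hp : 1 < p) {s : ℝ} (hs : 0 < s) :
    bkc p * (p * s) ^ (p - 2) = (p - 1) ^ (p - 1) * s ^ (p - 2) := by
  unfold bkc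
  have hp0 : 0 < p := by linarith
  rw [Real.mul_rpow hp0.le hs.le]
  have : p ^ (2 - p) * p ^ (p - 2) = 1 := by
    rw [← Real.rpow_add hp0]; simp
  calc _ = (p ^ (2 - p) * p ^ (p - 2)) * ((p - 1) ^ (p - 1) * s ^ (p - 2)) := by ring
    _ = _ := by rw [this, one_mul]

lemma rpow_pm1 {x : ℝ} (hx : 0 < x) (p : ℝ) : x ^ (p - 1) = x ^ (p - 2) * x := by
  rw [← Real.rpow_add_one hx.ne']; congr 1; ring

lemma rpow_pm0 {x : ℝ} (hx : 0 < x) (p : ℝ) : x ^ p = x ^ (p - 2) * x * x := by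
  rw [← rpow_pm1 hx, ← Real.rpow_add_one hx.ne']; congr 1; ring

lemma rpow_pm3 {x : ℝ} (hx : 0 < x) (p : ℝ) : x ^ (p - 2) = x ^ (p - 2 - 1) * x := by
  rw [← Real.rpow_add_one hx.ne']; congr 1; ring

lemma bk_matchA {p : ℝ} (hp : 1 < p) {s t : ℝ} (hs : 0 < s) (ht : t = (p - 1) * s) :
    bkAF p s = bkAP p s t := by
  have h1 : s + t = p * s := by rw [ht]; ring
  have h2 := bkc_mul hp hs
  have hp1 : 0 < p - 1 := by linarith
  unfold bkAF bkAP
  rw [h1]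
  have : (p - 1) ^ p = (p - 1) ^ (p - 1) * (p - 1) := by
    rw [← Real.rpow_add_one hp1.ne']; congr 1; ring
  rw [this]
  linear_combination -(p * (p - 1)) * (-h2)

lemma bk_matchB {p : ℝ} (hp : 1 < p) {s t : ℝ} (hs : 0 < s) (ht : t = (p - 1) * s) :
    bkBF p t = bkBP p s t := by
  have h1 : s + t = p * s := by rw [ht]; ring
  have h2 := bkc_mul hp hs
  have hp1 : 0 < p - 1 := by linarith
  unfold bkBF bkBP
  rw [h1]
  have h3 : (1 - (p - 2) * s / t) = 1 / (p - 1) := by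
    rw [ht]; field_simp; ring
  rw [h3]
  have h4 : t ^ (p - 2) = (p - 1) ^ (p - 2) * s ^ (p - 2) := by
    rw [ht, Real.mul_rpow hp1.le hs.le]
  rw [h4]
  have : (p - 1) ^ (p - 1) = (p - 1) ^ (p - 2) * (p - 1) := rpow_pm1 hp1 p
  rw [this] at h2
  calc _ = p * ((p - 1) ^ (p - 2) * (p - 1) * s ^ (p - 2)) / (p - 1) := by field_simp
    _ = _ := by rw [← h2]; ring

lemma bk_matchF {p : ℝ} (hp : 1 < p) {s t : ℝ} (hs : 0 ≤ s) (ht : t = (p - 1) * s) :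
    bkF p s t = 0 := by
  unfold bkF; rw [ht, Real.mul_rpow (by linarith) hs]; ring

lemma bk_matchP {p : ℝ} (hp : 1 < p) {s t : ℝ} (hs : 0 ≤ s) (ht : t = (p - 1) * s) :
    bkP p s t = 0 := by
  have h1 : s + t = p * s := by rw [ht]; ring
  unfold bkP; rw [h1]
  rcases hs.eq_or_lt with h | h
  · subst h; simp [Real.zero_rpow (by linarith : p ≠ 0)]
  · have : (p * s) ^ p = (p * s) ^ (p - 1) * (p * s) := by
      rw [← Real.rpow_add_one (by positivity)]; congr 1; ring
    rw [this]; ring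

/-- Sign of `p - 2`. -/
def bkSig (p σ : ℝ) : Prop := (σ = 1 ∧ 2 ≤ p) ∨ (σ = -1 ∧ p ≤ 2)

lemma rpow_cmp {p σ : ℝ} (h : bkSig p σ) {x y : ℝ} (hx : 0 < x) (hxy : x ≤ y) :
    σ * x ^ (p - 2) ≤ σ * y ^ (p - 2) := by
  rcases h with ⟨rfl, h⟩ | ⟨rfl, h⟩
  · have := Real.rpow_le_rpow hx.le hxy (by linarith : 0 ≤ p - 2)
    linarith
  · have := Real.rpow_le_rpow_of_nonpos hx hxy (by linarith : p - 2 ≤ 0)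
    linarith

lemma hasDerivAt_D {p : ℝ} (hp : 1 < p) {s t : ℝ} (hs : 0 < s) (ht : 0 ≤ t) :
    HasDerivAt (fun s => bkP p s t - bkF p s t) (s * (bkAP p s t - bkAF p s)) s := by
  have hr : 0 < s + t := by linarith
  have hp1 : 0 < p - 1 := by linarith
  have d1 : HasDerivAt (fun s => s + t) 1 s := (hasDerivAt_id s).add_const t
  have d2 := d1.rpow_const (p := p) (Or.inl hr.ne')
  have d3 := d1.rpow_const (p := p - 1) (Or.inl hr.ne')
  have d4 := (hasDerivAt_id s).rpow_const (p := p) (Or.inl hs.ne')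
  have d5 := ((d2.sub (((hasDerivAt_id s).const_mul p).mul d3)).const_mul (bkc p)).sub
    ((d4.const_mul ((p-1)^p)).const_sub (t ^ p))
  unfold bkP bkF bkAP bkAF
  refine d5.congr_deriv ?_
  simp only [id]
  rw [show p - 1 - 1 = p - 2 by ring, rpow_pm1 hs, rpow_pm1 hr]
  ring

lemma bk_F_le_P_pos {p σ : ℝ} (hp : 1 < p) (h : bkSig p σ) {s t : ℝ} (hs : 0 < s) (ht : 0 < t) :
    σ * bkF p s t ≤ σ * bkP p s t := by
  have hp1 : 0 < p - 1 := by linarith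
  have hp0 : 0 < p := by linarith
  set D : ℝ → ℝ := fun s => σ * (bkP p s t - bkF p s t) with hD
  have hder : ∀ x, 0 < x → HasDerivAt D (σ * (x * (bkAP p x t - bkAF p x))) x := fun x hx =>
    (hasDerivAt_D hp hx ht.le).const_mul σ
  have hsgn : ∀ x, 0 < x → σ * (x * (bkAP p x t - bkAF p x)) =
      (x * (p * (p - 1) * (p - 1) ^ (p - 1))) * (σ * x ^ (p - 2) - σ * ((x + t) / p) ^ (p - 2)) := by
    intro x hx
    have h2 := bkc_mul hp (s := (x + t) / p) (by positivity)
    rw [mul_div_cancel₀ _ hp0.ne'] at h2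
    have : (p - 1) ^ p = (p - 1) ^ (p - 1) * (p - 1) := by
      rw [← Real.rpow_add_one hp1.ne']; congr 1; ring
    unfold bkAP bkAF
    rw [this]
    linear_combination (-σ * x * p * (p - 1)) * h2
  set s0 := t / (p - 1) with hs0
  have hs0pos : 0 < s0 := by positivity
  have hts0 : t = (p - 1) * s0 := by rw [hs0]; field_simp
  have hD0 : D s0 = 0 := by
    simp only [hD]; rw [bk_matchF hp hs0pos.le hts0, bk_matchP hp hs0pos.le hts0]; ring
  have hcoef : ∀ x, 0 < x → 0 ≤ x * (p * (p - 1) * (p - 1) ^ (p - 1)) := fun x hx => by positivity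
  suffices hh : 0 ≤ D s by simp only [hD] at hh; linarith
  rw [← hD0]
  rcases le_total s s0 with hle | hle
  · have hanti : AntitoneOn D (Set.Icc s s0) := by
      apply antitoneOn_of_deriv_nonpos (convex_Icc _ _)
      · exact fun x hx => (hder x (by linarith [hx.1])).continuousAt.continuousWithinAt
      · intro x hx
        rw [interior_Icc] at hx
        exact (hder x (by linarith [hx.1])).differentiableAt.differentiableWithinAt
      · intro x hx
        rw [interior_Icc] at hx
        have hx0 : 0 < x := by linarith [hx.1]
        rw [(hder x hx0).deriv, hsgn x hx0]
        apply mul_nonpos_of_nonneg_of_nonpos (hcoef x hx0)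
        have : x ≤ (x + t) / p := by
          rw [le_div_iff₀ hp0, hts0]; nlinarith [hx.2]
        linarith [rpow_cmp h hx0 this]
    exact hanti ⟨le_refl _, hle⟩ ⟨hle, le_refl _⟩ hle
  · have hmono : MonotoneOn D (Set.Icc s0 s) := by
      apply monotoneOn_of_deriv_nonneg (convex_Icc _ _)
      · exact fun x hx => (hder x (by linarith [hx.1])).continuousAt.continuousWithinAt
      · intro x hx
        rw [interior_Icc] at hx
        exact (hder x (by linarith [hx.1])).differentiableAt.differentiableWithinAt
      · intro x hx
        rw [interior_Icc] at hx
        have hx0 : 0 < x := by linarith [hx.1]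
        rw [(hder x hx0).deriv, hsgn x hx0]
        apply mul_nonneg (hcoef x hx0)
        have : (x + t) / p ≤ x := by
          rw [div_le_iff₀ hp0, hts0]; nlinarith [hx.1]
        linarith [rpow_cmp h (by positivity) this]
    exact hmono ⟨le_refl _, hle⟩ ⟨hle, le_refl _⟩ hle

lemma bk_contF {p : ℝ} (hp : 1 < p) : Continuous (fun q : ℝ × ℝ => bkF p q.1 q.2) := by
  unfold bkF
  have : 0 ≤ p := by linarith
  exact (continuous_snd.rpow_const (fun _ => Or.inr this)).sub
    (continuous_const.mul (continuous_fst.rpow_const (fun _ => Or.inr this)))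

lemma bk_contP {p : ℝ} (hp : 1 < p) : Continuous (fun q : ℝ × ℝ => bkP p q.1 q.2) := by
  unfold bkP
  have h0 : 0 ≤ p := by linarith
  have h1 : 0 ≤ p - 1 := by linarith
  have hc : Continuous (fun q : ℝ × ℝ => q.1 + q.2) := by fun_prop
  exact continuous_const.mul ((hc.rpow_const (fun _ => Or.inr h0)).sub
    ((continuous_const.mul continuous_fst).mul (hc.rpow_const (fun _ => Or.inr h1))))

open Filter Topology in
lemma bk_F_le_P {p σ : ℝ} (hp : 1 < p) (h : bkSig p σ) {s t : ℝ} (hs : 0 ≤ s) (ht : 0 ≤ t) :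
    σ * bkF p s t ≤ σ * bkP p s t := by
  have hc : Tendsto (fun e : ℝ => (s + e, t + e)) (𝓝[>] 0) (𝓝 (s, t)) := by
    have : Continuous (fun e : ℝ => (s + e, t + e)) := by fun_prop
    have := this.tendsto 0
    simp only [add_zero] at this
    exact this.mono_left nhdsWithin_le_nhds
  have h1 := (((bk_contF hp).tendsto (s, t)).comp hc).const_mul σ
  have h2 := (((bk_contP hp).tendsto (s, t)).comp hc).const_mul σ
  refine le_of_tendsto_of_tendsto h1 h2 ?_
  filter_upwards [self_mem_nhdsWithin] with e he
  have he : 0 < e := he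
  exact bk_F_le_P_pos hp h (by linarith) (by linarith)

/-- tangent inequality from the sign of the second derivative -/
lemma bk_tangent {g g' g'' : ℝ → ℝ} {a b : ℝ} (hab : a ≤ b)
    (h1 : ∀ x, HasDerivAt g (g' x) x) (h2 : ∀ x, HasDerivAt g' (g'' x) x)
    (h3 : ∀ x, a ≤ x → x ≤ b → g'' x ≤ 0) :
    g' b ≤ g' a ∧ g b ≤ g a + g' a * (b - a) := by
  have hanti : AntitoneOn g' (Set.Icc a b) := by
    apply antitoneOn_of_deriv_nonpos (convex_Icc _ _)
    · exact fun x _ => (h2 x).continuousAt.continuousWithinAt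
    · exact fun x _ => (h2 x).differentiableAt.differentiableWithinAt
    · intro x hx
      rw [interior_Icc] at hx
      rw [(h2 x).deriv]; exact h3 x hx.1.le hx.2.le
  refine ⟨hanti ⟨le_refl _, hab⟩ ⟨hab, le_refl _⟩ hab, ?_⟩
  have hanti2 : AntitoneOn (fun x => g x - g' a * x) (Set.Icc a b) := by
    have hd : ∀ x, HasDerivAt (fun x => g x - g' a * x) (g' x - g' a * 1) x := fun x =>
      (h1 x).sub ((hasDerivAt_id x).const_mul (g' a))
    apply antitoneOn_of_deriv_nonpos (convex_Icc _ _)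
    · exact fun x _ => (hd x).continuousAt.continuousWithinAt
    · exact fun x _ => (hd x).differentiableAt.differentiableWithinAt
    · intro x hx
      rw [interior_Icc] at hx
      rw [(hd x).deriv]
      have := hanti ⟨le_refl _, hab⟩ ⟨hx.1.le, hx.2.le⟩ hx.1.le
      linarith
  have := hanti2 ⟨le_refl _, hab⟩ ⟨hab, le_refl _⟩ hab
  simp only at this
  linarith

end BurkAux

noncomputable section BurkAux2

lemma bk_alg {p σ s t a b H K : ℝ} (hp : 1 < p) (h : bkSig p σ) (hs : 0 < s) (ht : 0 < t)
    (ha : a ^ 2 ≤ H) (hb : b ^ 2 ≤ K) (hHK : σ * K ≤ σ * H) :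
    σ * ((s + t) * (K - H) + (p - 2) * (-(s + t) * (H - b ^ 2) - (p - 1) * s * (a + b) ^ 2
      - (s + t) * (s / t) * (K - b ^ 2))) ≤ 0 := by
  have hp1 : 0 < p - 1 := by linarith
  have hst : 0 < s + t := by linarith
  have e1 : 0 ≤ (p - 1) * s * (a + b) ^ 2 := by positivity
  have e2 : 0 ≤ (s + t) * (s / t) * (K - b ^ 2) := by
    have : 0 ≤ K - b ^ 2 := by linarith
    positivity
  rcases h with ⟨rfl, h⟩ | ⟨rfl, h⟩
  · have e3 : 0 ≤ (s + t) * (H - b ^ 2) := mul_nonneg hst.le (by linarith)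
    have e4 : 0 ≤ (s + t) * (H - K) := mul_nonneg hst.le (by linarith)
    have := mul_nonneg (by linarith : 0 ≤ p - 2) (by linarith :
      0 ≤ (s + t) * (H - b ^ 2) + (p - 1) * s * (a + b) ^ 2 + (s + t) * (s / t) * (K - b ^ 2))
    nlinarith
  · have e3 : 0 ≤ (s + t) * (K - b ^ 2) := mul_nonneg hst.le (by linarith)
    have e4 : 0 ≤ (s + t) * (K - H) := mul_nonneg hst.le (by linarith)
    have h1 := mul_nonneg (by linarith : 0 ≤ 2 - p) e3
    have h2 := mul_nonneg (by linarith : 0 ≤ p - 1) e4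
    have h3 := mul_nonneg (by linarith : 0 ≤ 2 - p) (by linarith :
      0 ≤ (p - 1) * s * (a + b) ^ 2 + (s + t) * (s / t) * (K - b ^ 2))
    nlinarith

/-- data of a regularised line -/
structure BkCurve (s : ℝ → ℝ) (m H : ℝ) : Prop where
  pos : ∀ x, 0 < s x
  der : ∀ x, HasDerivAt s ((m + H * x) / s x) x
  bd : ∀ x, ((m + H * x) / s x) ^ 2 ≤ H

lemma bk_lin (m H x : ℝ) : HasDerivAt (fun x => m + H * x) H x := by
  simpa using ((hasDerivAt_id x).const_mul H).const_add m

def bkP2 (p : ℝ) (s t : ℝ → ℝ) (m n H K x : ℝ) : ℝ :=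
  bkc p * p * ((s x + t x) ^ (p - 2 - 1) * ((s x + t x) * (K - H) +
    (p - 2) * (-(s x + t x) * (H - ((n + K * x) / t x) ^ 2)
      - (p - 1) * s x * ((m + H * x) / s x + (n + K * x) / t x) ^ 2
      - (s x + t x) * (s x / t x) * (K - ((n + K * x) / t x) ^ 2))))

lemma bkP_d1 {p : ℝ} {s t : ℝ → ℝ} {m n H K : ℝ} (hs : BkCurve s m H)
    (ht : BkCurve t n K) (x : ℝ) :
    HasDerivAt (fun x => bkP p (s x) (t x))
      (bkAP p (s x) (t x) * (m + H * x) + bkBP p (s x) (t x) * (n + K * x)) x := by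
  have hs0 := hs.pos x
  have ht0 := ht.pos x
  have hr : 0 < s x + t x := by linarith
  have d1 := (hs.der x).add (ht.der x)
  have d2 := d1.rpow_const (p := p) (Or.inl hr.ne')
  have d3 := d1.rpow_const (p := p - 1) (Or.inl hr.ne')
  have d5 := ((d2.sub (((hs.der x).const_mul p).mul d3)).const_mul (bkc p))
  unfold bkP bkAP bkBP
  refine d5.congr_deriv ?_
  simp only [Pi.add_apply]
  rw [show p - 1 - 1 = p - 2 by ring, rpow_pm1 hr]
  generalize (s x + t x) ^ (p - 2) = R
  generalize s x = s at *
  generalize t x = t at *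
  field_simp
  ring

lemma bkP_d2 {p : ℝ} {s t : ℝ → ℝ} {m n H K : ℝ} (hs : BkCurve s m H)
    (ht : BkCurve t n K) (x : ℝ) :
    HasDerivAt (fun x => bkAP p (s x) (t x) * (m + H * x) + bkBP p (s x) (t x) * (n + K * x))
      (bkP2 p s t m n H K x) x := by
  have hs0 := hs.pos x
  have ht0 := ht.pos x
  have hr : 0 < s x + t x := by linarith
  have d1 := (hs.der x).add (ht.der x)
  have d2 := d1.rpow_const (p := p - 2) (Or.inl hr.ne')
  have d3 := (d2.const_mul (-(bkc p * p * (p - 1)))).mul (bk_lin m H x)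
  have d4 := (((hs.der x).const_mul (p - 2)).div (ht.der x) ht0.ne').const_sub 1
  have d5 := ((d2.const_mul (bkc p * p)).mul d4).mul (bk_lin n K x)
  unfold bkAP bkBP bkP2
  refine (d3.add d5).congr_deriv ?_
  simp only [Pi.add_apply, Pi.mul_apply, Pi.div_apply]
  rw [rpow_pm3 hr]
  generalize (s x + t x) ^ (p - 2 - 1) = R
  generalize s x = s at *
  generalize t x = t at *
  field_simp
  ring

lemma bkP2_sign {p σ : ℝ} (hp : 1 < p) (h : bkSig p σ) {s t : ℝ → ℝ} {m n H K : ℝ}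
    (hs : BkCurve s m H) (ht : BkCurve t n K) (hHK : σ * K ≤ σ * H) (x : ℝ) :
    σ * bkP2 p s t m n H K x ≤ 0 := by
  have := bk_alg hp h (hs.pos x) (ht.pos x) (hs.bd x) (ht.bd x) hHK
  have hr : 0 < s x + t x := by linarith [hs.pos x, ht.pos x]
  have hc := bkc_pos hp
  unfold bkP2
  have h2 : 0 ≤ bkc p * p * (s x + t x) ^ (p - 2 - 1) := by positivity
  have := mul_nonpos_of_nonneg_of_nonpos h2 this
  linarith

def bkF2 (p : ℝ) (s t : ℝ → ℝ) (m n H K x : ℝ) : ℝ :=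
  p * t x ^ (p - 2) * (K + (p - 2) * ((n + K * x) / t x) ^ 2) -
    p * (p - 1) ^ p * s x ^ (p - 2) * (H + (p - 2) * ((m + H * x) / s x) ^ 2)

lemma bkF_d1 {p : ℝ} {s t : ℝ → ℝ} {m n H K : ℝ} (hs : BkCurve s m H)
    (ht : BkCurve t n K) (x : ℝ) :
    HasDerivAt (fun x => bkF p (s x) (t x))
      (bkAF p (s x) * (m + H * x) + bkBF p (t x) * (n + K * x)) x := by
  have hs0 := hs.pos x
  have ht0 := ht.pos x
  have d2 := (hs.der x).rpow_const (p := p) (Or.inl hs0.ne')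
  have d3 := (ht.der x).rpow_const (p := p) (Or.inl ht0.ne')
  have d5 := d3.sub (d2.const_mul ((p - 1) ^ p))
  unfold bkF bkAF bkBF
  refine d5.congr_deriv ?_
  rw [rpow_pm1 hs0, rpow_pm1 ht0]
  field_simp
  ring

lemma bkF_d2 {p : ℝ} {s t : ℝ → ℝ} {m n H K : ℝ} (hs : BkCurve s m H)
    (ht : BkCurve t n K) (x : ℝ) :
    HasDerivAt (fun x => bkAF p (s x) * (m + H * x) + bkBF p (t x) * (n + K * x))
      (bkF2 p s t m n H K x) x := by
  have hs0 := hs.pos x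
  have ht0 := ht.pos x
  have d2 := (hs.der x).rpow_const (p := p - 2) (Or.inl hs0.ne')
  have d3 := (ht.der x).rpow_const (p := p - 2) (Or.inl ht0.ne')
  have d5 := ((d2.const_mul (-(p * (p - 1) ^ p))).mul (bk_lin m H x)).add
    ((d3.const_mul p).mul (bk_lin n K x))
  unfold bkAF bkBF bkF2
  refine d5.congr_deriv ?_
  rw [rpow_pm3 hs0, rpow_pm3 ht0]
  field_simp
  ring

lemma bkF2_sign {p σ : ℝ} (hp : 1 < p) (h : bkSig p σ) {s t : ℝ → ℝ} {m n H K : ℝ}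
    (hs : BkCurve s m H) (ht : BkCurve t n K) (hHK : σ * K ≤ σ * H) (x : ℝ)
    (hx : t x ≤ (p - 1) * s x) :
    σ * bkF2 p s t m n H K x ≤ 0 := by
  have hp1 : 0 < p - 1 := by linarith
  have hs0 := hs.pos x
  have ht0 := ht.pos x
  have ha := hs.bd x
  have hb := ht.bd x
  have hcmp := rpow_cmp h ht0 hx
  rw [Real.mul_rpow hp1.le hs0.le] at hcmp
  unfold bkF2
  generalize (m + H * x) / s x = a at *
  generalize (n + K * x) / t x = b at *
  have e0 : (p - 1) ^ p = (p - 1) ^ (p - 2) * (p - 1) * (p - 1) := rpow_pm0 hp1 p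
  rw [e0]
  have q0 : 0 < (p - 1) ^ (p - 2) := by positivity
  have s0 : 0 < s x ^ (p - 2) := by have := hs.pos x; positivity
  have t0 : 0 < t x ^ (p - 2) := by have := ht.pos x; positivity
  generalize (p - 1) ^ (p - 2) = Q at *
  generalize s x ^ (p - 2) = S at *
  generalize t x ^ (p - 2) = T at *
  have hH : 0 ≤ H := le_trans (sq_nonneg a) ha
  have hK : 0 ≤ K := le_trans (sq_nonneg b) hb
  have hQS : 0 < Q * S := by positivity
  have hp0 : 0 < p := by linarith
  have goal' : σ * (T * (K + (p - 2) * b ^ 2) -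
      (Q * S) * ((p - 1) * (p - 1)) * (H + (p - 2) * a ^ 2)) ≤ 0 := by
    generalize Q * S = R at *
    rcases h with ⟨rfl, h⟩ | ⟨rfl, h⟩
    · have hTR : T ≤ R := by linarith
      have hKH : K ≤ H := by linarith
      have h1 : K + (p - 2) * b ^ 2 ≤ (p - 1) * H := by nlinarith
      have h2 : T * (K + (p - 2) * b ^ 2) ≤ R * ((p - 1) * H) :=
        mul_le_mul hTR h1 (by have := sq_nonneg b; nlinarith) hQS.le
      have h3 : (p - 1) * H ≤ (p - 1) * (p - 1) * (H + (p - 2) * a ^ 2) := by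
        have : H ≤ (p - 1) * (H + (p - 2) * a ^ 2) := by
          have := mul_nonneg (by linarith : 0 ≤ p - 2) (sq_nonneg a)
          nlinarith
        rw [mul_assoc]
        exact mul_le_mul_of_nonneg_left this hp1.le
      have h4 := mul_le_mul_of_nonneg_left h3 hQS.le
      linarith
    · have hTR : R ≤ T := by linarith
      have hKH : H ≤ K := by linarith
      have h1 : (p - 1) * H ≤ K + (p - 2) * b ^ 2 := by nlinarith
      have h2 : R * ((p - 1) * H) ≤ T * (K + (p - 2) * b ^ 2) :=
        mul_le_mul hTR h1 (by positivity) t0.le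
      have h3 : (p - 1) * (p - 1) * (H + (p - 2) * a ^ 2) ≤ (p - 1) * H := by
        have : (p - 1) * (H + (p - 2) * a ^ 2) ≤ H := by
          have := mul_nonneg (by linarith : 0 ≤ 2 - p) (sq_nonneg a)
          nlinarith
        rw [mul_assoc]
        exact mul_le_mul_of_nonneg_left this hp1.le
      have h4 := mul_le_mul_of_nonneg_left h3 hQS.le
      linarith
  have := mul_nonpos_of_nonneg_of_nonpos hp0.le goal'
  linarith

/-- first exit time -/
lemma bk_exit {ρ : ℝ → ℝ} (hρ : Continuous ρ) (h0 : ρ 0 ≤ 0) :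
    (∀ x, 0 ≤ x → x ≤ 1 → ρ x ≤ 0) ∨
      ∃ y, 0 ≤ y ∧ y ≤ 1 ∧ ρ y = 0 ∧ ∀ x, 0 ≤ x → x ≤ y → ρ x ≤ 0 := by
  by_cases hall : ∀ x, 0 ≤ x → x ≤ 1 → ρ x ≤ 0
  · exact Or.inl hall
  · right
    push Not at hall
    obtain ⟨z, hz0, hz1, hz⟩ := hall
    set E : Set ℝ := {x | 0 ≤ x ∧ 0 < ρ x} with hE
    have hbdd : BddBelow E := ⟨0, fun x hx => hx.1⟩
    have hne : E.Nonempty := ⟨z, hz0, hz⟩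
    have hy0 : 0 ≤ sInf E := le_csInf hne fun x hx => hx.1
    have hyz : sInf E ≤ z := csInf_le hbdd ⟨hz0, hz⟩
    have hlt : ∀ x, 0 ≤ x → x < sInf E → ρ x ≤ 0 := by
      intro x hx hxy
      by_contra hcon
      exact absurd (csInf_le hbdd (show x ∈ E from ⟨hx, not_le.mp hcon⟩)) (not_le.mpr hxy)
    have hge : 0 ≤ ρ (sInf E) := by
      have hmem : sInf E ∈ closure E := csInf_mem_closure hne hbdd
      have hsub : E ⊆ {x | 0 ≤ ρ x} := fun x hx => hx.2.le
      exact closure_minimal hsub (isClosed_le continuous_const hρ) hmem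
    have hle : ρ (sInf E) ≤ 0 := by
      rcases hy0.eq_or_lt with h | h
      · rw [← h]; exact h0
      · have hmem : sInf E ∈ closure (Set.Ioo 0 (sInf E)) := by
          rw [closure_Ioo h.ne]; exact ⟨h.le, le_refl _⟩
        have hsub : Set.Ioo 0 (sInf E) ⊆ {x | ρ x ≤ 0} := fun x hx => hlt x hx.1.le hx.2
        exact closure_minimal hsub (isClosed_le hρ continuous_const) hmem
    refine ⟨sInf E, hy0, hyz.trans hz1, le_antisymm hle hge, ?_⟩
    intro x hx hxy
    rcases hxy.eq_or_lt with h | h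
    · rw [h]; exact hle
    · exact hlt x hx h

/-- The minimal function in radial coordinates -/
def bkU (p s t : ℝ) : ℝ := open Classical in if t ≤ (p - 1) * s then bkF p s t else bkP p s t
def bkAU (p s t : ℝ) : ℝ := open Classical in if t ≤ (p - 1) * s then bkAF p s else bkAP p s t
def bkBU (p s t : ℝ) : ℝ := open Classical in if t ≤ (p - 1) * s then bkBF p t else bkBP p s t

lemma bkU_le_P {p σ : ℝ} (hp : 1 < p) (h : bkSig p σ) {s t : ℝ} (hs : 0 ≤ s) (ht : 0 ≤ t) :
    σ * bkU p s t ≤ σ * bkP p s t := by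
  unfold bkU; split_ifs
  · exact bk_F_le_P hp h hs ht
  · exact le_refl _

lemma bkF_le_U {p σ : ℝ} (hp : 1 < p) (h : bkSig p σ) {s t : ℝ} (hs : 0 ≤ s) (ht : 0 ≤ t) :
    σ * bkF p s t ≤ σ * bkU p s t := by
  unfold bkU; split_ifs
  · exact le_refl _
  · exact bk_F_le_P hp h hs ht

lemma bk_curve_ineq {p σ : ℝ} (hp : 1 < p) (h : bkSig p σ) {s t : ℝ → ℝ} {m n H K : ℝ}
    (hs : BkCurve s m H) (ht : BkCurve t n K) (hHK : σ * K ≤ σ * H) :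
    σ * bkU p (s 1) (t 1) ≤ σ * bkU p (s 0) (t 0) +
      σ * (bkAU p (s 0) (t 0) * m + bkBU p (s 0) (t 0) * n) := by
  have hU1 := bkU_le_P hp h (hs.pos 1).le (ht.pos 1).le
  have tanP : ∀ y, y ≤ 1 → σ * bkP p (s 1) (t 1) ≤ σ * bkP p (s y) (t y) +
      σ * (bkAP p (s y) (t y) * (m + H * y) + bkBP p (s y) (t y) * (n + K * y)) * (1 - y) := by
    intro y hy
    exact (bk_tangent hy (fun x => (bkP_d1 (p := p) hs ht x).const_mul σ)
      (fun x => (bkP_d2 hs ht x).const_mul σ)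
      (fun x _ _ => bkP2_sign hp h hs ht hHK x)).2
  by_cases h0 : t 0 ≤ (p - 1) * s 0
  · have hcont : Continuous (fun x => t x - (p - 1) * s x) := by
      have c1 : Continuous t := continuous_iff_continuousAt.mpr fun x => (ht.der x).continuousAt
      have c2 : Continuous s := continuous_iff_continuousAt.mpr fun x => (hs.der x).continuousAt
      fun_prop
    have tanF : ∀ y, 0 ≤ y → (∀ x, 0 ≤ x → x ≤ y → t x - (p - 1) * s x ≤ 0) →
      _ := fun y hy hall =>
      (bk_tangent hy (fun x => (bkF_d1 (p := p) hs ht x).const_mul σ)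
      (fun x => (bkF_d2 hs ht x).const_mul σ)
      (fun x hx0 hx1 => bkF2_sign hp h hs ht hHK x (by linarith [hall x hx0 hx1])))
    have eU : bkU p (s 0) (t 0) = bkF p (s 0) (t 0) := if_pos h0
    have eA : bkAU p (s 0) (t 0) = bkAF p (s 0) := if_pos h0
    have eB : bkBU p (s 0) (t 0) = bkBF p (t 0) := if_pos h0
    rw [eU, eA, eB]
    rcases bk_exit hcont (by linarith) with hall | ⟨y, hy0, hy1, hy, hall⟩
    · have := (tanF 1 zero_le_one hall).2
      have e1 : bkU p (s 1) (t 1) = bkF p (s 1) (t 1) :=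
        if_pos (by linarith [hall 1 zero_le_one le_rfl])
      rw [e1]
      simp only [mul_zero, add_zero, sub_zero, mul_one] at this
      exact this
    · obtain ⟨h1, h2⟩ := tanF y hy0 hall
      have hty : t y = (p - 1) * s y := by linarith
      have h3 := tanP y hy1
      rw [← bk_matchA hp (hs.pos y) hty, ← bk_matchB hp (hs.pos y) hty,
        bk_matchP hp (hs.pos y).le hty] at h3
      rw [bk_matchF hp (hs.pos y).le hty] at h2
      simp only [mul_zero, add_zero, sub_zero] at h1 h2
      have h4 := mul_le_mul_of_nonneg_right h1 (by linarith : 0 ≤ 1 - y)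
      linarith
  · have eU : bkU p (s 0) (t 0) = bkP p (s 0) (t 0) := if_neg h0
    have eA : bkAU p (s 0) (t 0) = bkAP p (s 0) (t 0) := if_neg h0
    have eB : bkBU p (s 0) (t 0) = bkBP p (s 0) (t 0) := if_neg h0
    rw [eU, eA, eB]
    have := tanP 0 zero_le_one
    simp only [mul_zero, add_zero, sub_zero, mul_one] at this
    linarith

end BurkAux2

noncomputable section BurkAux3

open Filter Topology

lemma bk_curve {H : Type*} [NormedAddCommGroup H] [InnerProductSpace ℝ H] (X h : H) {e : ℝ}
    (he : 0 < e) :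
    BkCurve (fun x => √(‖X + x • h‖ ^ 2 + e)) (inner ℝ X h) (‖h‖ ^ 2) := by
  have hpos : ∀ x : ℝ, 0 < ‖X + x • h‖ ^ 2 + e := fun x => by positivity
  have hexp : ∀ x : ℝ, ‖X + x • h‖ ^ 2 = ‖X‖ ^ 2 + 2 * (x * inner ℝ X h) + ‖h‖ ^ 2 * x ^ 2 := by
    intro x
    rw [norm_add_sq_real, inner_smul_right, norm_smul, mul_pow, Real.norm_eq_abs, sq_abs]; ring
  refine ⟨fun x => Real.sqrt_pos.mpr (hpos x), ?_, ?_⟩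
  · intro x
    have d : HasDerivAt (fun x : ℝ => ‖X + x • h‖ ^ 2 + e)
        (2 * (inner ℝ X h + ‖h‖ ^ 2 * x)) x := by
      have hf : (fun x : ℝ => ‖X + x • h‖ ^ 2 + e) =
          fun x => (‖X‖ ^ 2 + 2 * (x * inner ℝ X h) + ‖h‖ ^ 2 * x ^ 2) + e := by
        funext x; rw [hexp]
      rw [hf]
      have d1 := ((((hasDerivAt_id x).mul_const (inner ℝ X h)).const_mul 2).const_add
        (‖X‖ ^ 2)).add ((hasDerivAt_pow 2 x).const_mul (‖h‖ ^ 2))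
      refine (d1.add_const e).congr_deriv ?_
      simp; ring
    refine (d.sqrt (hpos x).ne').congr_deriv ?_
    have := Real.sqrt_pos.mpr (hpos x)
    field_simp
  · intro x
    rw [div_pow, Real.sq_sqrt (hpos x).le, div_le_iff₀ (hpos x), hexp]
    have hcs := abs_real_inner_le_norm X h
    have hcs2 : (inner ℝ X h) ^ 2 ≤ ‖X‖ ^ 2 * ‖h‖ ^ 2 := by
      rw [← mul_pow, ← sq_abs (inner ℝ X h)]
      exact pow_le_pow_left₀ (abs_nonneg _) hcs 2
    have : 0 ≤ ‖h‖ ^ 2 * e := by positivity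
    nlinarith

lemma bk_region {p a b e : ℝ} (hp : 1 < p) (ha : 0 ≤ a) (hb : 0 ≤ b) (he : 0 < e) :
    √(b ^ 2 + (p - 1) ^ 2 * e) ≤ (p - 1) * √(a ^ 2 + e) ↔ b ≤ (p - 1) * a := by
  have hp1 : 0 < p - 1 := by linarith
  have e1 : (p - 1) * √(a ^ 2 + e) = √(((p - 1) * a) ^ 2 + (p - 1) ^ 2 * e) := by
    rw [show ((p - 1) * a) ^ 2 + (p - 1) ^ 2 * e = (p - 1) ^ 2 * (a ^ 2 + e) by ring,
      Real.sqrt_mul (by positivity), Real.sqrt_sq hp1.le]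
  rw [e1, Real.sqrt_le_sqrt_iff (by positivity), add_le_add_iff_right,
    sq_le_sq₀ hb (by positivity)]

lemma bk_tend (a c : ℝ) (ha : 0 ≤ a) :
    Tendsto (fun e : ℝ => √(a ^ 2 + c * e)) (𝓝[>] 0) (𝓝 a) := by
  have hc : Continuous (fun e : ℝ => √(a ^ 2 + c * e)) := by fun_prop
  have := hc.tendsto 0
  simp only [mul_zero, add_zero, Real.sqrt_sq ha] at this
  exact this.mono_left nhdsWithin_le_nhds

lemma bk_tend' (a : ℝ) (ha : 0 ≤ a) :
    Tendsto (fun e : ℝ => √(a ^ 2 + e)) (𝓝[>] 0) (𝓝 a) := by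
  simpa using bk_tend a 1 ha

lemma bk_limU {p a b : ℝ} (hp : 1 < p) (ha : 0 ≤ a) (hb : 0 ≤ b) :
    Tendsto (fun e : ℝ => bkU p (√(a ^ 2 + e)) (√(b ^ 2 + (p - 1) ^ 2 * e))) (𝓝[>] 0)
      (𝓝 (bkU p a b)) := by
  have hc := (bk_tend' a ha).prodMk_nhds (bk_tend b ((p - 1) ^ 2) hb)
  by_cases h : b ≤ (p - 1) * a
  · rw [show bkU p a b = bkF p a b from if_pos h]
    refine (((bk_contF hp).tendsto (a, b)).comp hc).congr' ?_
    filter_upwards [self_mem_nhdsWithin] with e he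
    exact (if_pos ((bk_region hp ha hb he).mpr h)).symm
  · rw [show bkU p a b = bkP p a b from if_neg h]
    refine (((bk_contP hp).tendsto (a, b)).comp hc).congr' ?_
    filter_upwards [self_mem_nhdsWithin] with e he
    exact (if_neg (fun hh => h ((bk_region hp ha hb he).mp hh))).symm

lemma bk_limA {p a b m : ℝ} (hp : 1 < p) (ha : 0 ≤ a) (hb : 0 ≤ b) (hm : a = 0 → m = 0) :
    Tendsto (fun e : ℝ => bkAU p (√(a ^ 2 + e)) (√(b ^ 2 + (p - 1) ^ 2 * e)) * m) (𝓝[>] 0)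
      (𝓝 (bkAU p a b * m)) := by
  rcases ha.eq_or_lt with h0 | h0
  · rw [hm h0.symm]; simp
  apply Tendsto.mul_const
  have h1 := bk_tend' a ha
  have h2 := bk_tend b ((p - 1) ^ 2) hb
  by_cases h : b ≤ (p - 1) * a
  · rw [show bkAU p a b = bkAF p a from if_pos h]
    have : Tendsto (fun e : ℝ => bkAF p (√(a ^ 2 + e))) (𝓝[>] 0) (𝓝 (bkAF p a)) :=
      (h1.rpow_const (Or.inl h0.ne')).const_mul _
    refine this.congr' ?_
    filter_upwards [self_mem_nhdsWithin] with e he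
    exact (if_pos ((bk_region hp ha hb he).mpr h)).symm
  · rw [show bkAU p a b = bkAP p a b from if_neg h]
    have : Tendsto (fun e : ℝ => bkAP p (√(a ^ 2 + e)) (√(b ^ 2 + (p - 1) ^ 2 * e))) (𝓝[>] 0)
        (𝓝 (bkAP p a b)) :=
      ((h1.add h2).rpow_const (Or.inl (by positivity))).const_mul _
    refine this.congr' ?_
    filter_upwards [self_mem_nhdsWithin] with e he
    exact (if_neg (fun hh => h ((bk_region hp ha hb he).mp hh))).symm

lemma bk_limB {p a b m : ℝ} (hp : 1 < p) (ha : 0 ≤ a) (hb : 0 ≤ b) (hm : b = 0 → m = 0) :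
    Tendsto (fun e : ℝ => bkBU p (√(a ^ 2 + e)) (√(b ^ 2 + (p - 1) ^ 2 * e)) * m) (𝓝[>] 0)
      (𝓝 (bkBU p a b * m)) := by
  rcases hb.eq_or_lt with h0 | h0
  · rw [hm h0.symm]; simp
  apply Tendsto.mul_const
  have h1 := bk_tend' a ha
  have h2 := bk_tend b ((p - 1) ^ 2) hb
  by_cases h : b ≤ (p - 1) * a
  · rw [show bkBU p a b = bkBF p b from if_pos h]
    have : Tendsto (fun e : ℝ => bkBF p (√(b ^ 2 + (p - 1) ^ 2 * e))) (𝓝[>] 0) (𝓝 (bkBF p b)) :=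
      (h2.rpow_const (Or.inl h0.ne')).const_mul _
    refine this.congr' ?_
    filter_upwards [self_mem_nhdsWithin] with e he
    exact (if_pos ((bk_region hp ha hb he).mpr h)).symm
  · rw [show bkBU p a b = bkBP p a b from if_neg h]
    have : Tendsto (fun e : ℝ => bkBP p (√(a ^ 2 + e)) (√(b ^ 2 + (p - 1) ^ 2 * e))) (𝓝[>] 0)
        (𝓝 (bkBP p a b)) :=
      (((h1.add h2).rpow_const (Or.inl (by positivity))).const_mul _).mul
        (((h1.const_mul (p - 2)).div h2 h0.ne').const_sub 1)
    refine this.congr' ?_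
    filter_upwards [self_mem_nhdsWithin] with e he
    exact (if_neg (fun hh => h ((bk_region hp ha hb he).mp hh))).symm

lemma bk_hilbert_ineq {H : Type*} [NormedAddCommGroup H] [InnerProductSpace ℝ H]
    {p σ : ℝ} (hp : 1 < p) (hσ : bkSig p σ) (X Y h k : H)
    (hhk : σ * ‖k‖ ^ 2 ≤ σ * ‖h‖ ^ 2) :
    σ * bkU p ‖X + h‖ ‖Y + k‖ ≤ σ * bkU p ‖X‖ ‖Y‖ +
      σ * (bkAU p ‖X‖ ‖Y‖ * inner ℝ X h + bkBU p ‖X‖ ‖Y‖ * inner ℝ Y k) := by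
  have hp1 : 0 < p - 1 := by linarith
  have L1 := (bk_limU hp (norm_nonneg (X + h)) (norm_nonneg (Y + k))).const_mul σ
  have L2 := (bk_limU hp (norm_nonneg X) (norm_nonneg Y)).const_mul σ
  have LA := bk_limA (m := inner ℝ X h) hp (norm_nonneg X) (norm_nonneg Y) (by
    intro h0; rw [norm_eq_zero.mp h0, inner_zero_left])
  have LB := bk_limB (m := inner ℝ Y k) hp (norm_nonneg X) (norm_nonneg Y) (by
    intro h0; rw [norm_eq_zero.mp h0, inner_zero_left])
  refine le_of_tendsto_of_tendsto L1 (L2.add ((LA.add LB).const_mul σ)) ?_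
  filter_upwards [self_mem_nhdsWithin] with e he
  have he : 0 < e := he
  have := bk_curve_ineq hp hσ (bk_curve X h he)
    (bk_curve Y k (show 0 < (p - 1) ^ 2 * e by positivity)) hhk
  simpa using this

/-- Lower bound on the axis: zigzag argument. -/
lemma bk_axis {p : ℝ} (hp : 1 < p) {W : ℝ → ℝ → ℝ} {G : ℝ → ℝ}
    (hW : ∀ s t ε x y : ℝ, (ε = 1 ∨ ε = -1) → 0 ≤ x → 0 ≤ y → 0 < x + y →
      y * W (s + x) (t + ε * x) + x * W (s - y) (t - ε * y) ≤ (x + y) * W s t)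
    (hG : ∀ r c : ℝ, 0 ≤ r → r < 1 → 0 < c →
      c ^ p * G r ≤ W (c * r) (c * (1 - r)) ∧ c ^ p * G r ≤ W (-(c * r)) (c * (1 - r)))
    {r c : ℝ} (hr : 0 < r) (hr1 : r * p < 1) (hc : 0 < c) :
    c ^ p * (G r / (1 - p * r)) ≤ W 0 c := by
  have hr2 : r < 1 := by nlinarith
  set Q : Set ℝ := {q | ∃ c : ℝ, 0 < c ∧ q = W 0 c / c ^ p} with hQ
  have hQb : BddBelow Q := by
    refine ⟨G 0, ?_⟩
    rintro q ⟨c, hc, rfl⟩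
    rw [le_div_iff₀ (by positivity)]
    have := (hG 0 c le_rfl one_pos hc).1
    simp at this
    linarith
  have hQne : Q.Nonempty := ⟨_, 1, one_pos, rfl⟩
  set K := sInf Q with hK
  have hKle : ∀ c, 0 < c → c ^ p * K ≤ W 0 c := by
    intro c hc
    have : K ≤ W 0 c / c ^ p := csInf_le hQb ⟨c, hc, rfl⟩
    rw [le_div_iff₀ (by positivity)] at this
    linarith
  suffices hmain : G r / (1 - p * r) ≤ K by
    exact le_trans (mul_le_mul_of_nonneg_left hmain (by positivity)) (hKle c hc)
  have hstep : ∀ δ : ℝ, 0 < δ → δ < r →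
      r * ((1 + 2 * δ) ^ p * K) + (1 + 2 * δ) ^ (p - 1) * δ * (G r - K) + δ * G r
        ≤ (r + δ) * K := by
    intro δ hδ hδr
    have hrd : 0 < r + δ := by linarith
    have : (r * ((1 + 2 * δ) ^ p * K) + (1 + 2 * δ) ^ (p - 1) * δ * (G r - K) + δ * G r)
        / (r + δ) ≤ K := by
      refine le_csInf hQne ?_
      rintro q ⟨c, hc, rfl⟩
      rw [div_le_div_iff₀ hrd (by positivity)]
      have h1 := hW 0 c 1 (δ * c) (r * c) (Or.inl rfl) (by positivity) (by positivity)
        (by positivity)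
      have hd : 0 < (1 + 2 * δ) * c := by positivity
      have h2 := hW (δ * c) (c + δ * c) (-1) (r * ((1 + 2 * δ) * c) - δ * c) (δ * c)
        (Or.inr rfl) (by nlinarith [mul_pos hr hc, mul_pos (mul_pos hr hδ) hc, mul_pos (sub_pos.mpr hδr) hc]) (by positivity) (by ring_nf; positivity)
      have g1 := (hG r ((1 + 2 * δ) * c) hr.le hr2 hd).1
      have g2 := (hG r c hr.le hr2 hc).2
      have k1 := hKle ((1 + 2 * δ) * c) hd
      rw [show δ * c + (r * ((1 + 2 * δ) * c) - δ * c) = (1 + 2 * δ) * c * r by ring,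
        show c + δ * c + -1 * (r * ((1 + 2 * δ) * c) - δ * c) = (1 + 2 * δ) * c * (1 - r) by ring,
        show δ * c - δ * c = 0 by ring,
        show c + δ * c - -1 * (δ * c) = (1 + 2 * δ) * c by ring,
        show r * ((1 + 2 * δ) * c) - δ * c + δ * c = r * (1 + 2 * δ) * c by ring] at h2
      rw [show (0 : ℝ) + δ * c = δ * c by ring, show c + 1 * (δ * c) = c + δ * c by ring,
        show (0 : ℝ) - r * c = -(c * r) by ring, show c - 1 * (r * c) = c * (1 - r) by ring] at h1
      have hM : ((1 + 2 * δ) * c) ^ p = (1 + 2 * δ) ^ (p - 1) * (1 + 2 * δ) * c ^ p := by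
        rw [Real.mul_rpow (by positivity) hc.le, ← Real.rpow_add_one (by positivity)]
        congr 2; ring
      have hM2 : (1 + 2 * δ) ^ p = (1 + 2 * δ) ^ (p - 1) * (1 + 2 * δ) := by
        rw [← Real.rpow_add_one (by positivity)]
        congr 1; ring
      rw [hM] at g1 k1
      rw [hM2]
      generalize W (δ * c) (c + δ * c) = w at *
      generalize W ((1 + 2 * δ) * c * r) ((1 + 2 * δ) * c * (1 - r)) = w1 at *
      generalize W 0 ((1 + 2 * δ) * c) = w2 at *
      generalize W (-(c * r)) (c * (1 - r)) = w3 at *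
      generalize W 0 c = w0 at *
      have hcp : 0 < c ^ p := by positivity
      generalize c ^ p = C at *
      have hm0 : 0 < (1 + 2 * δ) ^ (p - 1) := by positivity
      generalize (1 + 2 * δ) ^ (p - 1) = M at *
      have h1' : r * w + δ * w3 ≤ (r + δ) * w0 := by
        have : c * (r * w + δ * w3) ≤ c * ((r + δ) * w0) := by linarith
        exact le_of_mul_le_mul_left this hc
      have h2' : δ * w1 + (r * (1 + 2 * δ) - δ) * w2 ≤ r * (1 + 2 * δ) * w := by
        have : c * (δ * w1 + (r * (1 + 2 * δ) - δ) * w2) ≤ c * (r * (1 + 2 * δ) * w) := by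
          linarith
        exact le_of_mul_le_mul_left this hc
      have hpos : 0 ≤ r * (1 + 2 * δ) - δ := by nlinarith [mul_pos hr hδ]
      have h3 := mul_le_mul_of_nonneg_left g1 hδ.le
      have h4 := mul_le_mul_of_nonneg_left k1 hpos
      have h5 : (1 + 2 * δ) * (M * C * (δ * G r + (r * (1 + 2 * δ) - δ) * K)) ≤
          (1 + 2 * δ) * (r * w) := by nlinarith
      have h6 := le_of_mul_le_mul_left h5 (by positivity)
      have h7 := mul_le_mul_of_nonneg_left g2 hδ.le
      nlinarith
    rwa [div_le_iff₀ hrd, mul_comm K] at this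
  -- derivative at zero
  have hd1 : HasDerivAt (fun δ : ℝ => (r + δ) * K - (r * ((1 + 2 * δ) ^ p * K) +
      (1 + 2 * δ) ^ (p - 1) * δ * (G r - K) + δ * G r)) (2 * (K * (1 - p * r) - G r)) 0 := by
    have a0 : HasDerivAt (fun δ : ℝ => 1 + 2 * δ) 2 0 := bk_lin 1 2 0
    have a1 := a0.rpow_const (p := p) (Or.inl (by norm_num))
    have a2 := a0.rpow_const (p := p - 1) (Or.inl (by norm_num))
    have b1 := ((hasDerivAt_id (0 : ℝ)).const_add r).mul_const K
    have b2 := ((a1.mul_const K).const_mul r).add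
      ((a2.mul (hasDerivAt_id (0 : ℝ))).mul_const (G r - K))
    have b3 := b2.add ((hasDerivAt_id (0 : ℝ)).mul_const (G r))
    refine (b1.sub b3).congr_deriv ?_
    simp
    ring
  have hnn : 0 ≤ 2 * (K * (1 - p * r) - G r) := by
    have ht := hd1.tendsto_slope_zero_right
    refine ge_of_tendsto ht ?_
    filter_upwards [Ioo_mem_nhdsGT hr] with δ hδ
    have := hstep δ hδ.1 hδ.2
    simp only [zero_add, smul_eq_mul]
    apply mul_nonneg (inv_nonneg.mpr hδ.1.le)
    simp
    linarith
  rw [div_le_iff₀ (by linarith)]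
  linarith

end BurkAux3

noncomputable section BurkAux4

open Filter Topology

lemma bk_slope {p : ℝ} (hp : 1 < p) :
    Tendsto (fun r : ℝ => bkF p r (1 - r) / (1 - p * r)) (𝓝[<] (1 / p)) (𝓝 (bkc p)) := by
  have hp0 : 0 < p := by linarith
  have hs : 0 < 1 / p := by positivity
  have ht : 1 - 1 / p = (p - 1) * (1 / p) := by field_simp
  have ht0 : 0 < 1 - 1 / p := by rw [ht]; exact mul_pos (by linarith) hs
  have hd : HasDerivAt (fun r : ℝ => bkF p r (1 - r)) (-(p * bkc p)) (1 / p) := by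
    have d1 := ((hasDerivAt_id (1 / p)).const_sub 1).rpow_const (p := p) (Or.inl ht0.ne')
    have d2 := (hasDerivAt_id (1 / p)).rpow_const (p := p) (Or.inl hs.ne')
    have d3 := d1.sub (d2.const_mul ((p - 1) ^ p))
    unfold bkF
    refine d3.congr_deriv ?_
    simp only [id]
    have e1 := bk_matchA hp hs ht
    have e2 := bk_matchB hp hs ht
    unfold bkAF bkAP at e1
    unfold bkBF bkBP at e2
    rw [rpow_pm1 hs, rpow_pm1 ht0]
    rw [show 1 / p + (1 - 1 / p) = 1 by ring, Real.one_rpow] at e1 e2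
    have e3 : (1 - (p - 2) * (1 / p) / (1 - 1 / p)) * (1 - 1 / p) = 1 - 1 / p - (p - 2) / p := by
      have h1 : 1 - 1 / p ≠ 0 := ht0.ne'
      rw [sub_mul, div_mul_cancel₀ _ h1]
      ring
    have e4 : (1 / p) * p = 1 := by field_simp
    calc _ = -((p * (1 - 1 / p) ^ (p - 2)) * (1 - 1 / p)) +
          (-(p * (p - 1) ^ p) * (1 / p) ^ (p - 2)) * (1 / p) := by ring
      _ = -(bkc p * p) * ((1 - (p - 2) * (1 / p) / (1 - 1 / p)) * (1 - 1 / p)) +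
          (-(bkc p * p * (p - 1))) * (1 / p) := by rw [e1, e2]; ring
      _ = _ := by rw [e3]; field_simp; ring
  have h := (hasDerivAt_iff_tendsto_slope_left_right.mp hd).1
  have h2 := h.const_mul (-(1 / p))
  have h3 : -(1 / p) * -(p * bkc p) = bkc p := by field_simp
  rw [h3] at h2
  refine h2.congr' ?_
  filter_upwards [self_mem_nhdsWithin] with r hr
  have hr : r < 1 / p := hr
  rw [slope_def_field, bk_matchF hp hs.le ht]
  have h4 : r - 1 / p ≠ 0 := by linarith
  have h5 : 1 - p * r = -p * (r - 1 / p) := by field_simp; ring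
  rw [h5]
  field_simp
  ring

lemma bkF_homog {p c s t : ℝ} (hc : 0 ≤ c) (hs : 0 ≤ s) (ht : 0 ≤ t) :
    bkF p (c * s) (c * t) = c ^ p * bkF p s t := by
  unfold bkF; rw [Real.mul_rpow hc hs, Real.mul_rpow hc ht]; ring

lemma bk_lower {p μ : ℝ} (hp : 1 < p) {W : ℝ → ℝ → ℝ}
    (hW : ∀ s t ε x y : ℝ, (ε = 1 ∨ ε = -1) → 0 ≤ x → 0 ≤ y → 0 < x + y →
      y * W (s + x) (t + ε * x) + x * W (s - y) (t - ε * y) ≤ (x + y) * W s t)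
    (hF : ∀ s t, μ * bkF p |s| |t| ≤ W s t) {s t : ℝ} (hs : 0 ≤ s) (ht : 0 ≤ t) :
    μ * bkU p s t ≤ W s t := by
  have hp0 : 0 < p := by linarith
  have hp1 : 0 < p - 1 := by linarith
  unfold bkU
  split_ifs with hreg
  · have := hF s t
    rwa [abs_of_nonneg hs, abs_of_nonneg ht] at this
  push Not at hreg
  have htp : 0 < t := lt_of_le_of_lt (by positivity) hreg
  have hc : 0 < s + t := by linarith
  -- axis bound
  have hax : (s + t) ^ p * (μ * bkc p) ≤ W 0 (s + t) := by
    have hlim := ((bk_slope hp).const_mul μ).const_mul ((s + t) ^ p)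
    refine le_of_tendsto hlim ?_
    have hmem : Set.Ioo 0 (1 / p) ∈ 𝓝[<] (1 / p) := Ioo_mem_nhdsLT (by positivity)
    filter_upwards [hmem] with r hr
    have := bk_axis hp (G := fun r => μ * bkF p r (1 - r)) hW (by
      intro r c hr hr1 hc
      have h1 := hF (c * r) (c * (1 - r))
      have h2 := hF (-(c * r)) (c * (1 - r))
      have hr' : 0 ≤ 1 - r := by linarith
      rw [abs_neg] at h2
      rw [abs_of_nonneg (by positivity : 0 ≤ c * r), abs_of_nonneg (by positivity : 0 ≤ c * (1 - r)),
        bkF_homog hc.le hr hr'] at h1 h2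
      constructor <;> linarith) hr.1 (by have := hr.2; rwa [lt_div_iff₀ hp0] at this) hc
    rwa [mul_div_assoc] at this
  rcases hs.eq_or_lt with h0 | h0
  · subst h0
    simp only [zero_add] at *
    unfold bkP
    simp
    linarith
  have hx : 0 < (s + t) / p - s := by
    rw [sub_pos, lt_div_iff₀ hp0]; nlinarith
  have h1 := hW s t (-1) ((s + t) / p - s) s (Or.inr rfl) hx.le hs (by linarith)
  have e1 : s + ((s + t) / p - s) = (s + t) / p := by ring
  have e2 : t + -1 * ((s + t) / p - s) = (p - 1) * ((s + t) / p) := by field_simp; ring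
  have e3 : t - -1 * s = s + t := by ring
  rw [e1, e2, e3, sub_self, sub_add_cancel] at h1
  have h2 := hF ((s + t) / p) ((p - 1) * ((s + t) / p))
  rw [abs_of_nonneg (by positivity), abs_of_nonneg (by positivity),
    bk_matchF hp (by positivity) rfl, mul_zero] at h2
  have h3 := mul_nonneg hs h2
  have h4 := mul_le_mul_of_nonneg_left hax hx.le
  have h5 : ((s + t) / p) * (μ * bkP p s t) = ((s + t) / p - s) * ((s + t) ^ p * (μ * bkc p)) := by
    unfold bkP
    have : (s + t) ^ p = (s + t) ^ (p - 1) * (s + t) := by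
      rw [← Real.rpow_add_one hc.ne']; congr 1; ring
    rw [this]
    field_simp
  have h6 : ((s + t) / p) * (μ * bkP p s t) ≤ ((s + t) / p) * W s t := by linarith
  exact le_of_mul_le_mul_left h6 (by positivity)

lemma bk_unit {H : Type*} [NormedAddCommGroup H] [InnerProductSpace ℝ H] [Nontrivial H] (x : H) :
    ∃ e : H, ‖e‖ = 1 ∧ x = ‖x‖ • e := by
  by_cases hx : x = 0
  · obtain ⟨e, he⟩ := exists_norm_eq H zero_le_one
    exact ⟨e, he, by simp [hx]⟩
  · have h : ‖x‖ ≠ 0 := norm_ne_zero_iff.mpr hx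
    exact ⟨‖x‖⁻¹ • x, by rw [norm_smul, norm_inv, norm_norm, inv_mul_cancel₀ h],
      by rw [smul_smul, mul_inv_cancel₀ h, one_smul]⟩

/-- directional concavity -/
def BkZig {H : Type*} [NormedAddCommGroup H] [InnerProductSpace ℝ H] (V : H × H → ℝ) : Prop :=
  ∀ (w d : H × H) (x y : ℝ), ‖d.2‖ ≤ ‖d.1‖ → 0 ≤ x → 0 ≤ y → 0 < x + y →
    y * V (w + x • d) + x * V (w - y • d) ≤ (x + y) * V w

lemma bk_zig {H : Type*} [NormedAddCommGroup H] [InnerProductSpace ℝ H] {V : H × H → ℝ}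
    (hV : BkZig V) {e₁ e₂ : H} (h1 : ‖e₁‖ = 1) (h2 : ‖e₂‖ = 1) :
    ∀ s t ε x y : ℝ, (ε = 1 ∨ ε = -1) → 0 ≤ x → 0 ≤ y → 0 < x + y →
      y * V ((s + x) • e₁, (t + ε * x) • e₂) + x * V ((s - y) • e₁, (t - ε * y) • e₂)
        ≤ (x + y) * V (s • e₁, t • e₂) := by
  intro s t ε x y hε hx hy hxy
  have hε' : |ε| = 1 := by rcases hε with rfl | rfl <;> simp
  have := hV (s • e₁, t • e₂) (e₁, ε • e₂) x y (by simp [norm_smul, h1, h2, hε']) hx hy hxy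
  have ea : ((s • e₁, t • e₂) : H × H) + x • (e₁, ε • e₂) =
      ((s + x) • e₁, (t + ε * x) • e₂) := by
    ext <;> simp [add_smul, smul_smul, mul_comm]
  have eb : ((s • e₁, t • e₂) : H × H) - y • (e₁, ε • e₂) =
      ((s - y) • e₁, (t - ε * y) • e₂) := by
    ext <;> simp [sub_smul, smul_smul, mul_comm]
  rwa [ea, eb] at this

lemma bk_le_Aop {X Z : Type*} [AddCommGroup X] [Module ℝ X] {φ : Z → X → Z} {g : Z → EReal}
    {z : Z} {c : EReal}
    (h : ∀ ψ : X → EReal, IsEConcave ψ → (∀ d, g (φ z d) ≤ ψ d) → c ≤ ψ 0) :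
    c ≤ Aop φ g z :=
  le_iInf fun ψ => h ψ.1 ψ.2.1 ψ.2.2

/-- abstract EReal part -/
lemma bk_abstract {H : Type*} [NormedAddCommGroup H] [InnerProductSpace ℝ H]
    (f u : Option (H × H) → EReal) (fR uR : H × H → ℝ)
    (hfΔ : f none = ⊥) (huΔ : u none = ⊥)
    (hf : ∀ w, f (some w) = (fR w : EReal)) (hu : ∀ w, u (some w) = (uR w : EReal))
    (h1 : ∀ w, fR w ≤ uR w)
    (h2 : ∀ w : H × H, ∃ A B : ℝ, ∀ d : H × H, ‖d.2‖ ≤ ‖d.1‖ →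
      uR (w + d) ≤ uR w + (A * inner ℝ w.1 d.1 + B * inner ℝ w.2 d.2))
    (h3 : ∀ V : H × H → ℝ, (∀ w, fR w ≤ V w) → BkZig V → ∀ w, uR w ≤ V w) :
    ∀ z : Option (H × H), (⨆ n : ℕ, (Aop burkPhi)^[n] f z) = u z := by
  have hmono : ∀ g g' : Option (H × H) → EReal, (∀ z, g z ≤ g' z) →
      ∀ z, Aop burkPhi g z ≤ Aop burkPhi g' z := by
    intro g g' hgg z
    unfold Aop concaveEnvelope
    refine le_iInf fun ψ => ?_
    exact iInf_le_of_le ⟨ψ.1, ψ.2.1, fun y => (hgg _).trans (ψ.2.2 y)⟩ le_rfl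
  have hphi0 : ∀ z : Option (H × H), burkPhi z 0 = z := by
    intro z; cases z <;> simp [burkPhi]
  have hself : ∀ (g : Option (H × H) → EReal) z, g z ≤ Aop burkPhi g z := by
    intro g z
    refine bk_le_Aop fun ψ _ hψ => ?_
    have := hψ 0
    rwa [hphi0] at this
  have hAu : ∀ z, Aop burkPhi u z ≤ u z := by
    intro z
    cases z with
    | none =>
      unfold Aop concaveEnvelope
      refine iInf_le_of_le ⟨fun _ => ⊥, ?_, ?_⟩ ?_
      · intro x y a b ha hb hab
        rcases hb.eq_or_lt with h | h
        · have ha1 : a = 1 := by linarith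
          subst ha1; subst h; simp
        · rw [EReal.coe_mul_bot_of_pos h]; simp
      · intro y; simp [burkPhi, huΔ]
      · exact bot_le
    | some w =>
      obtain ⟨A, B, hAB⟩ := h2 w
      unfold Aop concaveEnvelope
      refine iInf_le_of_le ⟨fun d => ((uR w + (A * inner ℝ w.1 d.1 + B * inner ℝ w.2 d.2) : ℝ) :
        EReal), ?_, ?_⟩ ?_
      · intro x y a b ha hb hab
        rw [← EReal.coe_mul, ← EReal.coe_mul, ← EReal.coe_add, EReal.coe_le_coe_iff]
        apply le_of_eq
        simp only [Prod.fst_add, Prod.snd_add, Prod.smul_fst, Prod.smul_snd, inner_add_right,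
          inner_smul_right]
        linear_combination (uR w) * hab
      · intro d
        simp only [burkPhi]
        split_ifs with hd
        · rw [huΔ]; exact bot_le
        · rw [hu, EReal.coe_le_coe_iff]
          exact hAB d (not_lt.mp hd)
      · simp [hu]
  -- bounds
  have hub : ∀ n z, (Aop burkPhi)^[n] f z ≤ u z := by
    intro n
    induction n with
    | zero =>
      intro z
      cases z with
      | none => simp [hfΔ]
      | some w => simp [hf, hu, h1 w]
    | succ n ih =>
      intro z
      rw [Function.iterate_succ_apply']
      exact (hmono _ _ ih z).trans (hAu z)
  have hstep : ∀ n z, (Aop burkPhi)^[n] f z ≤ (Aop burkPhi)^[n + 1] f z := by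
    intro n z
    rw [Function.iterate_succ_apply']
    exact hself _ z
  have hlb : ∀ n z, f z ≤ (Aop burkPhi)^[n] f z := by
    intro n z
    induction n with
    | zero => exact le_rfl
    | succ n ih => exact ih.trans (hstep n z)
  -- real versions
  have hreal : ∀ n w, (((Aop burkPhi)^[n] f (some w)).toReal : EReal) =
      (Aop burkPhi)^[n] f (some w) := by
    intro n w
    apply EReal.coe_toReal
    · intro h
      have := hub n (some w)
      rw [h, hu] at this
      exact absurd this (not_le.mpr (EReal.coe_lt_top _))
    · intro h
      have := hlb n (some w)
      rw [h, hf] at this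
      exact absurd this (not_le.mpr (EReal.bot_lt_coe _))
  set v : ℕ → H × H → ℝ := fun n w => ((Aop burkPhi)^[n] f (some w)).toReal with hv
  have hvub : ∀ n w, v n w ≤ uR w := by
    intro n w
    have := hub n (some w)
    rw [← hreal, hu, EReal.coe_le_coe_iff] at this
    exact this
  have hvlb : ∀ n w, fR w ≤ v n w := by
    intro n w
    have := hlb n (some w)
    rw [← hreal, hf, EReal.coe_le_coe_iff] at this
    exact this
  have hvmono : ∀ w, Monotone fun n => v n w := by
    intro w
    refine monotone_nat_of_le_succ fun n => ?_
    have := hstep n (some w)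
    rw [← hreal, ← hreal (n + 1), EReal.coe_le_coe_iff] at this
    exact this
  have hvzig : ∀ n (w d : H × H) (x y : ℝ), ‖d.2‖ ≤ ‖d.1‖ → 0 ≤ x → 0 ≤ y → 0 < x + y →
      y * v n (w + x • d) + x * v n (w - y • d) ≤ (x + y) * v (n + 1) w := by
    intro n w d x y hd hx hy hxy
    have key : (((y / (x + y)) * v n (w + x • d) + (x / (x + y)) * v n (w - y • d) : ℝ) : EReal)
        ≤ ((v (n + 1) w : ℝ) : EReal) := by
      rw [hreal (n + 1), Function.iterate_succ_apply']
      refine bk_le_Aop fun ψ hψ1 hψ2 => ?_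
      have hψ := hψ1 (x • d) (-(y • d)) (y / (x + y)) (x / (x + y)) (by positivity)
        (by positivity) (by field_simp; ring)
      have hz : (y / (x + y)) • x • d + (x / (x + y)) • -(y • d) = 0 := by
        rw [smul_neg, smul_smul, smul_smul, ← sub_eq_add_neg, ← sub_smul]
        rw [show y / (x + y) * x - x / (x + y) * y = 0 by ring, zero_smul]
      rw [hz] at hψ
      refine le_trans ?_ hψ
      have g1 := hψ2 (x • d)
      have g2 := hψ2 (-(y • d))
      have p1 : burkPhi (some w) (x • d) = some (w + x • d) := by
        have : ¬ (‖(x • d).2‖ > ‖(x • d).1‖) := by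
          simp only [Prod.smul_fst, Prod.smul_snd, norm_smul, not_lt, gt_iff_lt]
          gcongr
        simp only [burkPhi, if_neg this]
        rfl
      have p2 : burkPhi (some w) (-(y • d)) = some (w - y • d) := by
        have : ¬ (‖(-(y • d)).2‖ > ‖(-(y • d)).1‖) := by
          simp only [Prod.fst_neg, Prod.snd_neg, norm_neg, Prod.smul_fst, Prod.smul_snd,
            norm_smul, not_lt, gt_iff_lt]
          gcongr
        simp only [burkPhi, if_neg this]
        rw [sub_eq_add_neg]
        rfl
      rw [p1] at g1
      rw [p2] at g2
      rw [EReal.coe_add, EReal.coe_mul, EReal.coe_mul]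
      have e1 := hreal n (w + x • d)
      have e2 := hreal n (w - y • d)
      simp only [hv]
      rw [e1, e2]
      exact add_le_add
        (mul_le_mul_of_nonneg_left g1 (EReal.coe_nonneg.mpr (by positivity)))
        (mul_le_mul_of_nonneg_left g2 (EReal.coe_nonneg.mpr (by positivity)))
    rw [EReal.coe_le_coe_iff] at key
    have := mul_le_mul_of_nonneg_left key hxy.le
    calc _ = (x + y) * (y / (x + y) * v n (w + x • d) + x / (x + y) * v n (w - y • d)) := by
          field_simp
      _ ≤ _ := this
  set V : H × H → ℝ := fun w => ⨆ n, v n w with hV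
  have hbdd : ∀ w, BddAbove (Set.range fun n => v n w) := fun w =>
    ⟨uR w, by rintro _ ⟨n, rfl⟩; exact hvub n w⟩
  have hlim : ∀ w, Tendsto (fun n => v n w) atTop (𝓝 (V w)) := fun w =>
    tendsto_atTop_ciSup (hvmono w) (hbdd w)
  have hVzig : BkZig V := by
    intro w d x y hd hx hy hxy
    refine le_of_tendsto_of_tendsto'
      (((hlim (w + x • d)).const_mul y).add ((hlim (w - y • d)).const_mul x))
      ((((tendsto_add_atTop_iff_nat 1).mpr (hlim w))).const_mul (x + y))
      (fun n => hvzig n w d x y hd hx hy hxy)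
  have hfV : ∀ w, fR w ≤ V w := fun w => (hvlb 0 w).trans (le_ciSup (hbdd w) 0)
  have huV := h3 V hfV hVzig
  intro z
  apply le_antisymm (iSup_le fun n => hub n z)
  cases z with
  | none => rw [huΔ]; exact bot_le
  | some w =>
    have ht : Tendsto (fun n => ((v n w : ℝ) : EReal)) atTop (𝓝 (V w : EReal)) :=
      (continuous_coe_real_ereal.tendsto _).comp (hlim w)
    rw [hu]
    refine le_trans (EReal.coe_le_coe_iff.mpr (huV w)) ?_
    refine le_of_tendsto' ht fun n => ?_
    rw [hreal]
    exact le_iSup (fun n => (Aop burkPhi)^[n] f (some w)) n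

end BurkAux4

noncomputable section BurkAux5

lemma bkU_zero (p : ℝ) : bkU p 0 0 = bkF p 0 0 := if_pos (by simp)

lemma bk_h3_ge {H : Type*} [NormedAddCommGroup H] [InnerProductSpace ℝ H] {p μ : ℝ} (hp : 1 < p)
    (V : H × H → ℝ) (hfV : ∀ w : H × H, μ * bkF p ‖w.1‖ ‖w.2‖ ≤ V w) (hV : BkZig V) (w : H × H) :
    μ * bkU p ‖w.1‖ ‖w.2‖ ≤ V w := by
  rcases subsingleton_or_nontrivial H with hH | hH
  · have := hfV w
    have e1 : w.1 = 0 := Subsingleton.elim _ _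
    have e2 : w.2 = 0 := Subsingleton.elim _ _
    rw [e1, e2, norm_zero] at this ⊢
    rwa [bkU_zero]
  · obtain ⟨e₁, h1, he1⟩ := bk_unit w.1
    obtain ⟨e₂, h2, he2⟩ := bk_unit w.2
    have := bk_lower (μ := μ) hp (W := fun s t => V (s • e₁, t • e₂)) (bk_zig hV h1 h2) (by
      intro s t
      have := hfV (s • e₁, t • e₂)
      simpa [norm_smul, h1, h2] using this) (norm_nonneg w.1) (norm_nonneg w.2)
    simp only [← he1, ← he2] at this
    exact this

lemma bk_h3_le {H : Type*} [NormedAddCommGroup H] [InnerProductSpace ℝ H] {p μ : ℝ} (hp : 1 < p)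
    (V : H × H → ℝ) (hfV : ∀ w : H × H, μ * bkF p ‖w.2‖ ‖w.1‖ ≤ V w) (hV : BkZig V) (w : H × H) :
    μ * bkU p ‖w.2‖ ‖w.1‖ ≤ V w := by
  rcases subsingleton_or_nontrivial H with hH | hH
  · have := hfV w
    have e1 : w.1 = 0 := Subsingleton.elim _ _
    have e2 : w.2 = 0 := Subsingleton.elim _ _
    rw [e1, e2, norm_zero] at this ⊢
    rwa [bkU_zero]
  · obtain ⟨e₁, h1, he1⟩ := bk_unit w.1
    obtain ⟨e₂, h2, he2⟩ := bk_unit w.2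
    have hz := bk_zig hV h1 h2
    have := bk_lower (μ := μ) hp (W := fun s t => V (t • e₁, s • e₂)) (by
      intro s t ε x y hε hx hy hxy
      rcases hε with rfl | rfl
      · have := hz t s 1 x y (Or.inl rfl) hx hy hxy
        simpa using this
      · have := hz t s (-1) y x (Or.inr rfl) hy hx (by linarith)
        simp only [neg_one_mul, sub_neg_eq_add, ← sub_eq_add_neg] at this ⊢
        linarith) (by
      intro s t
      have := hfV (t • e₁, s • e₂)
      simpa [norm_smul, h1, h2] using this) (norm_nonneg w.2) (norm_nonneg w.1)
    simp only [← he1, ← he2] at this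
    exact this

lemma bk_max_ge {p : ℝ} (h : 2 ≤ p) : max p (p / (p - 1)) = p := by
  apply max_eq_left
  rw [div_le_iff₀ (by linarith)]; nlinarith

lemma bk_max_le {p : ℝ} (hp : 1 < p) (h : p ≤ 2) : max p (p / (p - 1)) = p / (p - 1) := by
  apply max_eq_right
  rw [le_div_iff₀ (by linarith)]; nlinarith

lemma bk_const {p : ℝ} (hp : 1 < p) : p * (1 - 1 / p) ^ (p - 1) = bkc p := by
  have hp0 : 0 < p := by linarith
  unfold bkc
  rw [show 1 - 1 / p = (p - 1) / p by field_simp, Real.div_rpow (by linarith) hp0.le,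
    show 2 - p = 1 - (p - 1) by ring, Real.rpow_sub hp0 1 (p - 1), Real.rpow_one]
  generalize p ^ (p - 1) = R
  ring

lemma bk_P_form {p : ℝ} (hp : 1 < p) {s t : ℝ} (hs : 0 ≤ s) (ht : 0 ≤ t) :
    bkP p s t = bkc p * (t - (p - 1) * s) * (s + t) ^ (p - 1) := by
  unfold bkP
  rcases (add_nonneg hs ht).eq_or_lt with h | h
  · have h1 : s = 0 := by linarith
    have h2 : t = 0 := by linarith
    subst h1; subst h2
    simp [Real.zero_rpow (by linarith : p ≠ 0)]
  · have : (s + t) ^ p = (s + t) ^ (p - 1) * (s + t) := by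
      rw [← Real.rpow_add_one h.ne']; congr 1; ring
    rw [this]; ring

theorem bk_case_ge {H : Type*} [NormedAddCommGroup H]
    [InnerProductSpace ℝ H] (p : ℝ) (hp : 1 < p) (hp2 : 2 ≤ p)
    (f utilde u : Option (H × H) → EReal)
    (hfΔ : f none = ⊥)
    (hf : ∀ w : H × H, f (some w) =
      ((‖w.2‖ ^ p - (max p (p / (p - 1)) - 1) ^ p * ‖w.1‖ ^ p : ℝ) : EReal))
    (hutilde : ∀ w : H × H, utilde (some w) =
      ((p * (1 - 1 / max p (p / (p - 1))) ^ (p - 1) *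
        (‖w.2‖ - (max p (p / (p - 1)) - 1) * ‖w.1‖) * (‖w.1‖ + ‖w.2‖) ^ (p - 1) : ℝ) : EReal))
    (huΔ : u none = ⊥)
    (hu_ge : ∀ w : H × H, u (some w) =
      if ‖w.2‖ ≤ (max p (p / (p - 1)) - 1) * ‖w.1‖ then f (some w) else utilde (some w)) :
    ∀ z : Option (H × H), (⨆ n : ℕ, (Aop burkPhi)^[n] f z) = u z := by
  rw [bk_max_ge hp2] at *
  have hσ : bkSig p 1 := Or.inl ⟨rfl, hp2⟩
  apply bk_abstract f u (fun w => 1 * bkF p ‖w.1‖ ‖w.2‖) (fun w => 1 * bkU p ‖w.1‖ ‖w.2‖) hfΔ huΔ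
  · intro w; rw [hf]; simp [bkF]
  · intro w
    rw [hu_ge]
    unfold bkU
    split_ifs with h
    · rw [hf]; simp [bkF]
    · rw [hutilde, bk_const hp, bk_P_form hp (norm_nonneg _) (norm_nonneg _), one_mul]
  · intro w; exact bkF_le_U hp hσ (norm_nonneg _) (norm_nonneg _)
  · intro w
    refine ⟨bkAU p ‖w.1‖ ‖w.2‖, bkBU p ‖w.1‖ ‖w.2‖, fun d hd => ?_⟩
    have := bk_hilbert_ineq hp hσ w.1 w.2 d.1 d.2 (by
      simp only [one_mul]; exact pow_le_pow_left₀ (norm_nonneg _) hd 2)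
    simpa using this
  · intro V hfV hV w
    exact bk_h3_ge hp V hfV hV w

theorem bk_case_le {H : Type*} [NormedAddCommGroup H]
    [InnerProductSpace ℝ H] (p : ℝ) (hp : 1 < p) (hp2 : p ≤ 2)
    (f utilde u : Option (H × H) → EReal)
    (hfΔ : f none = ⊥)
    (hf : ∀ w : H × H, f (some w) =
      ((‖w.2‖ ^ p - (max p (p / (p - 1)) - 1) ^ p * ‖w.1‖ ^ p : ℝ) : EReal))
    (hutilde : ∀ w : H × H, utilde (some w) =
      ((p * (1 - 1 / max p (p / (p - 1))) ^ (p - 1) *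
        (‖w.2‖ - (max p (p / (p - 1)) - 1) * ‖w.1‖) * (‖w.1‖ + ‖w.2‖) ^ (p - 1) : ℝ) : EReal))
    (huΔ : u none = ⊥)
    (hu_le : ∀ w : H × H, u (some w) =
      if ‖w.2‖ ≤ (max p (p / (p - 1)) - 1) * ‖w.1‖ then utilde (some w) else f (some w)) :
    ∀ z : Option (H × H), (⨆ n : ℕ, (Aop burkPhi)^[n] f z) = u z := by
  rw [bk_max_le hp hp2] at *
  have hp0 : 0 < p := by linarith
  have hp1 : 0 < p - 1 := by linarith
  have hσ : bkSig p (-1) := Or.inr ⟨rfl, hp2⟩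
  have eq1 : p / (p - 1) - 1 = (p - 1)⁻¹ := by field_simp; ring
  have eq2 : 1 - 1 / (p / (p - 1)) = 1 / p := by field_simp; ring
  simp only [eq1, eq2] at hf hutilde hu_le
  set L : ℝ := ((p - 1)⁻¹) ^ p with hL
  have hLpos : 0 < L := by positivity
  have hLinv : L * (p - 1) ^ p = 1 := by
    rw [hL, ← Real.mul_rpow (by positivity) hp1.le, inv_mul_cancel₀ hp1.ne', Real.one_rpow]
  have hFeq : ∀ s t : ℝ, t ^ p - L * s ^ p = -L * bkF p t s := by
    intro s t; unfold bkF; linear_combination (-t ^ p) * hLinv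
  have hPeq : ∀ s t : ℝ, 0 ≤ s → 0 ≤ t → p * (1 / p) ^ (p - 1) * (t - (p - 1)⁻¹ * s) *
      (s + t) ^ (p - 1) = -L * bkP p t s := by
    intro s t hs ht
    rw [bk_P_form hp ht hs, ← bk_const hp]
    have h1 : (1 - 1 / p) ^ (p - 1) = (p - 1) ^ (p - 1) * (1 / p) ^ (p - 1) := by
      rw [← Real.mul_rpow hp1.le (by positivity)]; congr 1; field_simp
    have h2 : (p - 1) ^ p = (p - 1) ^ (p - 1) * (p - 1) := by
      rw [← Real.rpow_add_one hp1.ne']; congr 1; ring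
    have h3 : L * (p - 1) ^ (p - 1) = (p - 1)⁻¹ := by
      rw [h2] at hLinv
      refine eq_inv_of_mul_eq_one_left ?_
      linarith
    have h4 : (p - 1)⁻¹ * (p - 1) = 1 := inv_mul_cancel₀ hp1.ne'
    rw [h1, add_comm t s]
    calc _ = p * (1 / p) ^ (p - 1) * ((p - 1)⁻¹ * (p - 1) * t - (p - 1)⁻¹ * s) *
      (s + t) ^ (p - 1) := by rw [h4, one_mul]
      _ = -(L * (p - 1) ^ (p - 1)) * (p * (1 / p) ^ (p - 1)) * (s - (p - 1) * t) *
        (s + t) ^ (p - 1) := by rw [h3]; ring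
      _ = _ := by ring
  have hreg : ∀ s t : ℝ, t ≤ (p - 1)⁻¹ * s ↔ (p - 1) * t ≤ s := by
    intro s t
    rw [inv_mul_eq_div, le_div_iff₀ hp1, mul_comm]
  apply bk_abstract f u (fun w => -L * bkF p ‖w.2‖ ‖w.1‖) (fun w => -L * bkU p ‖w.2‖ ‖w.1‖)
    hfΔ huΔ
  · intro w; rw [hf, hFeq]
  · intro w
    rw [hu_le]
    split_ifs with h
    · rw [hutilde, hPeq _ _ (norm_nonneg _) (norm_nonneg _)]
      rw [hreg] at h
      unfold bkU
      split_ifs with h'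
      · have he := le_antisymm h' h
        rw [bk_matchP hp (norm_nonneg _) he, bk_matchF hp (norm_nonneg _) he]
      · rfl
    · rw [hf, hFeq]
      rw [hreg, not_le] at h
      unfold bkU
      rw [if_pos h.le]
  · intro w
    have := bkF_le_U hp hσ (norm_nonneg w.2) (norm_nonneg w.1)
    have := mul_le_mul_of_nonneg_left this hLpos.le
    linarith
  · intro w
    refine ⟨-L * bkBU p ‖w.2‖ ‖w.1‖, -L * bkAU p ‖w.2‖ ‖w.1‖, fun d hd => ?_⟩
    have h1 := bk_hilbert_ineq hp hσ w.2 w.1 d.2 d.1 (by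
      have := pow_le_pow_left₀ (norm_nonneg _) hd 2
      linarith)
    have h2 := mul_le_mul_of_nonneg_left h1 hLpos.le
    simp only [Prod.fst_add, Prod.snd_add]
    linarith
  · intro V hfV hV w
    exact bk_h3_le hp V hfV hV w

end BurkAux5

/-- Burkholder's function: with `p* = max(p, p/(p-1))`,
`f(Δ) = -∞`, `f(x₁,x₂) = |x₂|^p - (p*-1)^p |x₁|^p`, and
`ũ(x₁,x₂) = p(1-1/p*)^{p-1}(|x₂| - (p*-1)|x₁|)(|x₁|+|x₂|)^{p-1}`, the minimal fixed
point of `A` dominating `f` (i.e. `A^∞f = lim_n Aⁿf`) equals `u`, where for `1 < p ≤ 2`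
`u = ũ` on `{|x₂| ≤ (p*-1)|x₁|}` and `u = f` on `{|x₂| > (p*-1)|x₁|}` (and `u(Δ) = -∞`),
while for `2 ≤ p < ∞` the same holds with `ũ` and `f` interchanged. -/
theorem burkholder_minimal_fixed_point {H : Type*} [NormedAddCommGroup H]
    [InnerProductSpace ℝ H] (p : ℝ) (hp : 1 < p)
    (f utilde u : Option (H × H) → EReal)
    (hfΔ : f none = ⊥)
    (hf : ∀ w : H × H, f (some w) =
      ((‖w.2‖ ^ p - (max p (p / (p - 1)) - 1) ^ p * ‖w.1‖ ^ p : ℝ) : EReal))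
    (hutildeΔ : utilde none = ⊥)
    (hutilde : ∀ w : H × H, utilde (some w) =
      ((p * (1 - 1 / max p (p / (p - 1))) ^ (p - 1) *
        (‖w.2‖ - (max p (p / (p - 1)) - 1) * ‖w.1‖) * (‖w.1‖ + ‖w.2‖) ^ (p - 1) : ℝ) : EReal))
    (huΔ : u none = ⊥)
    (hu_le : p ≤ 2 → ∀ w : H × H, u (some w) =
      if ‖w.2‖ ≤ (max p (p / (p - 1)) - 1) * ‖w.1‖ then utilde (some w) else f (some w))
    (hu_ge : 2 ≤ p → ∀ w : H × H, u (some w) =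
      if ‖w.2‖ ≤ (max p (p / (p - 1)) - 1) * ‖w.1‖ then f (some w) else utilde (some w)) :
    ∀ z : Option (H × H), (⨆ n : ℕ, (Aop burkPhi)^[n] f z) = u z := by
  rcases le_total p 2 with h | h
  · exact bk_case_le p hp h f utilde u hfΔ hf hutilde huΔ (hu_le h)
  · exact bk_case_ge p hp h f utilde u hfΔ hf hutilde huΔ (hu_ge h)
end

section
/- Let 1 < p < ∞, p* = max(p, p/(p−1)), and let H be a real Hilbert space. Let M¹, M² be H-valued simple martingales (on a common filtered probability space, taking finitely many values) with (M¹₀, M²₀) = (x₁, x₂) and such that M² is differentially subordinate to M¹: |M²_{t+1} − M²_t| ≤ |M¹_{t+1} − M¹_t| almost surely for all t ≥ 0. Then for every T ∈ ℕ, E[|M²_T|^p − (p*−1)^p |M¹_T|^p] ≤ u(x₁, x₂), where u(x₁, x₂) = p(1−1/p*)^{p−1}(|x₂| − (p*−1)|x₁|)(|x₁|+|x₂|)^{p−1} if (1 < p ≤ 2 and |x₂| ≤ (p*−1)|x₁|) or (2 ≤ p and |x₂| > (p*−1)|x₁|), and u(x₁,x₂) = |x₂|^p − (p*−1)^p|x₁|^p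 otherwise. In particular, if x₁ = x₂ then ‖M²_T‖_{L^p} ≤ (p*−1) ‖M¹_T‖_{L^p}. -/
open MeasureTheory Filter Topology

lemma bk_glue (q f1 f2 g1 g2 d1 d2 : ℝ → ℝ) (hq : Continuous q)
    (hf1 : ∀ s, HasDerivAt f1 (g1 s) s) (hf2 : ∀ s, HasDerivAt f2 (g2 s) s)
    (hg1 : ∀ s, HasDerivAt g1 (d1 s) s) (hg2 : ∀ s, HasDerivAt g2 (d2 s) s)
    (hd1 : ∀ s, 0 ≤ q s → d1 s ≤ 0) (hd2 : ∀ s, q s ≤ 0 → d2 s ≤ 0)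
    (hf : ∀ s, q s = 0 → f1 s = f2 s) (hg : ∀ s, q s = 0 → g1 s = g2 s) :
    (if 0 ≤ q 1 then f1 1 else f2 1) ≤
      (if 0 ≤ q 0 then f1 0 else f2 0) + (if 0 ≤ q 0 then g1 0 else g2 0) := by
  set f : ℝ → ℝ := fun s => if 0 ≤ q s then f1 s else f2 s with hfdef
  set g : ℝ → ℝ := fun s => if 0 ≤ q s then g1 s else g2 s with hgdef
  have hpos : ∀ s, 0 < q s → ∀ᶠ z in 𝓝 s, 0 < q z := fun s hs =>
    hq.continuousAt.eventually (lt_mem_nhds hs)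
  have hneg : ∀ s, q s < 0 → ∀ᶠ z in 𝓝 s, q z < 0 := fun s hs =>
    hq.continuousAt.eventually (gt_mem_nhds hs)
  have hfd : ∀ s, HasDerivAt f (g s) s := by
    intro s
    rcases lt_trichotomy (q s) 0 with h | h | h
    · have : g s = g2 s := by simp [hgdef, not_le.2 h]
      rw [this]
      refine (hf2 s).congr_of_eventuallyEq ?_
      filter_upwards [hneg s h] with z hz
      simp [hfdef, not_le.2 hz]
    · have e1 : g s = g1 s := by simp [hgdef, h]
      have h1 : HasDerivWithinAt f (g s) {z | 0 ≤ q z} s := by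
        rw [e1]
        refine (hf1 s).hasDerivWithinAt.congr (fun z hz => ?_) ?_
        · exact if_pos hz
        · simp [hfdef, h]
      have h2 : HasDerivWithinAt f (g s) {z | 0 ≤ q z}ᶜ s := by
        rw [e1, hg s h]
        refine (hf2 s).hasDerivWithinAt.congr (fun z hz => ?_) ?_
        · exact if_neg hz
        · simp [hfdef, h, hf s h]
      have := h1.union h2
      rwa [Set.union_compl_self, hasDerivWithinAt_univ] at this
    · have : g s = g1 s := by simp [hgdef, h.le]
      rw [this]
      refine (hf1 s).congr_of_eventuallyEq ?_
      filter_upwards [hpos s h] with z hz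
      simp [hfdef, hz.le]
  have hgc : Continuous g := by
    refine Continuous.if_le (continuous_iff_continuousAt.2 fun s => (hg1 s).continuousAt)
      (continuous_iff_continuousAt.2 fun s => (hg2 s).continuousAt) continuous_const hq ?_
    intro s hs
    exact hg s hs.symm
  have sl : ∀ (w : ℝ → ℝ) (d s r : ℝ), HasDerivAt w d s → d < r →
      ∀ᶠ z in 𝓝[>] s, slope w s z < r := by
    intro w d s r hw hr
    have := (hasDerivAt_iff_tendsto_slope.1 hw).eventually (gt_mem_nhds hr)
    exact this.filter_mono (nhdsWithin_mono _ (fun z hz => ne_of_gt hz))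
  have hga : ∀ t ∈ Set.Icc (0:ℝ) 1, g t ≤ g 0 := by
    refine image_le_of_liminf_slope_right_le_deriv_boundary (f := g) (B := fun _ => g 0)
      (B' := fun _ => 0) hgc.continuousOn le_rfl continuousOn_const
      (fun x _ => hasDerivWithinAt_const _ _ _) ?_
    intro s _ r hr
    apply Filter.Eventually.frequently
    rcases lt_trichotomy (q s) 0 with h | h | h
    · filter_upwards [sl g2 _ s r (hg2 s) ((hd2 s h.le).trans_lt hr),
        (hneg s h).filter_mono nhdsWithin_le_nhds] with z hz hz2
      simpa [slope_def_field, hgdef, not_le.2 h, not_le.2 hz2] using hz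
    · filter_upwards [sl g2 _ s r (hg2 s) ((hd2 s h.le).trans_lt hr),
        sl g1 _ s r (hg1 s) ((hd1 s h.ge).trans_lt hr)] with z hz hz2
      have e1 : g s = g1 s := by simp [hgdef, h]
      have e2 := hg s h
      by_cases hz3 : 0 ≤ q z
      · have : g z = g1 z := by simp [hgdef, hz3]
        rw [slope_def_field] at *
        rwa [this, e1]
      · have : g z = g2 z := by simp [hgdef, hz3]
        rw [slope_def_field] at *
        rwa [this, e1, e2]
    · filter_upwards [sl g1 _ s r (hg1 s) ((hd1 s h.le).trans_lt hr),
        (hpos s h).filter_mono nhdsWithin_le_nhds] with z hz hz2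
      simpa [slope_def_field, hgdef, h.le, hz2.le] using hz
  have := (convex_Icc (0:ℝ) 1).image_sub_le_mul_sub_of_deriv_le (f := f) (C := g 0)
    (fun s _ => (hfd s).continuousAt.continuousWithinAt)
    (fun s _ => (hfd s).differentiableAt.differentiableWithinAt)
    (fun s hs => by rw [(hfd s).deriv]; exact hga s (interior_subset hs))
    0 (by simp) 1 (by simp) zero_le_one
  change f 1 ≤ f 0 + g 0
  linarith

lemma bk_K (p : ℝ) (hp : 1 < p) : p * (1 - 1 / p) ^ (p - 1) * p ^ (p - 2) = (p - 1) ^ (p - 1) := by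
  have h0 : 0 < p := by linarith
  have h1 : 1 - 1 / p = (p - 1) / p := by field_simp
  rw [h1, Real.div_rpow (by linarith) h0.le]
  have h2 : p ^ (p - 1) = p ^ (p - 2) * p := by
    rw [← Real.rpow_add_one h0.ne']; congr 1; ring
  rw [h2]
  have : 0 < p ^ (p - 2) := Real.rpow_pos_of_pos h0 _
  field_simp

/-- One half of Burkholder's function. -/
noncomputable def bkPhi (p a b : ℝ) : ℝ :=
  if 0 ≤ b - (p - 1) * a then p * (1 - 1 / p) ^ (p - 1) * (b - (p - 1) * a) * (a + b) ^ (p - 1)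
  else b ^ p - (p - 1) ^ p * a ^ p

noncomputable def bkX (p a b : ℝ) : ℝ :=
  if 0 ≤ b - (p - 1) * a then -(p * (1 - 1 / p) ^ (p - 1) * (p * (a + b) ^ (p - 2) * (p - 1)))
  else -((p - 1) ^ p * p * a ^ (p - 2))

noncomputable def bkY (p a b : ℝ) : ℝ :=
  if 0 ≤ b - (p - 1) * a then
    p * (1 - 1 / p) ^ (p - 1) * (p * (a + b) ^ (p - 2) * (1 - (p - 2) * a / b))
  else p * b ^ (p - 2)

lemma bk_pow_deriv (p H2 s : ℝ) (a α : ℝ → ℝ) (hpos : 0 < a s)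
    (ha : HasDerivAt a (α s / a s) s) (hα : HasDerivAt α H2 s) :
    HasDerivAt (fun s => a s ^ p) (p * a s ^ (p - 2) * α s) s ∧
    HasDerivAt (fun s => p * a s ^ (p - 2) * α s)
      (p * a s ^ (p - 2) * ((p - 2) * (α s / a s) ^ 2 + H2)) s := by
  have e1 : a s ^ (p - 1) = a s ^ (p - 2) * a s := by
    rw [← Real.rpow_add_one hpos.ne']; congr 1; ring
  have e2 : a s ^ (p - 2) = a s ^ (p - 2 - 1) * a s := by
    rw [← Real.rpow_add_one hpos.ne']; congr 1; ring
  constructor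
  · refine HasDerivAt.congr_deriv (ha.rpow_const (p := p) (Or.inl hpos.ne')) ?_
    rw [e1]; field_simp
  · refine HasDerivAt.congr_deriv (((ha.rpow_const (p := p - 2) (Or.inl hpos.ne')).const_mul p).mul hα) ?_
    rw [e2]; field_simp

lemma bk_F_deriv (p H2 K2 s : ℝ) (a α b β : ℝ → ℝ) (apos : 0 < a s) (bpos : 0 < b s)
    (ha : HasDerivAt a (α s / a s) s) (hα : HasDerivAt α H2 s)
    (hb : HasDerivAt b (β s / b s) s) (hβ : HasDerivAt β K2 s) :
    HasDerivAt (fun s => (b s - (p - 1) * a s) * (a s + b s) ^ (p - 1))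
      (p * (a s + b s) ^ (p - 2) * (β s - (p - 1) * α s - (p - 2) * a s * (β s / b s))) s ∧
    HasDerivAt
      (fun s => p * (a s + b s) ^ (p - 2) * (β s - (p - 1) * α s - (p - 2) * a s * (β s / b s)))
      (p * (a s + b s) ^ (p - 3) * (-((p - 1) * (p - 2) * a s * (α s / a s + β s / b s) ^ 2)
        + (a s + b s) * ((p - 1) * (K2 - H2)
          - (p - 2) * (a s + b s) * ((K2 - (β s / b s) ^ 2) / b s)))) s := by
  have rpos : 0 < a s + b s := by positivity
  have e1 : (a s + b s) ^ (p - 1) = (a s + b s) ^ (p - 3) * (a s + b s) * (a s + b s) := by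
    rw [← Real.rpow_add_one rpos.ne', ← Real.rpow_add_one rpos.ne']; congr 1; ring
  have e2 : (a s + b s) ^ (p - 2) = (a s + b s) ^ (p - 3) * (a s + b s) := by
    rw [← Real.rpow_add_one rpos.ne']; congr 1; ring
  have e3 : p - 1 - 1 = p - 2 := by ring
  have e4 : p - 2 - 1 = p - 3 := by ring
  constructor
  · refine HasDerivAt.congr_deriv ((hb.sub (ha.const_mul (p - 1))).mul
      ((ha.add hb).rpow_const (p := p - 1) (Or.inl rpos.ne'))) ?_
    simp only [Pi.add_apply, Pi.sub_apply, Pi.mul_apply, Pi.div_apply]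
    rw [e3, e1, e2]; field_simp; ring
  · refine HasDerivAt.congr_deriv ((((ha.add hb).rpow_const (p := p - 2) (Or.inl rpos.ne')).const_mul p).mul
      ((hβ.sub (hα.const_mul (p - 1))).sub ((ha.const_mul (p - 2)).mul (hβ.div hb bpos.ne')))) ?_
    simp only [Pi.add_apply, Pi.sub_apply, Pi.mul_apply, Pi.div_apply]
    rw [e4, e2]; field_simp; ring

lemma bk_core (p : ℝ) (hp : 1 < p) (δ : ℝ) (H2 K2 : ℝ) (a α b β : ℝ → ℝ)
    (hδ : (δ = 1 ∧ 2 ≤ p ∧ K2 ≤ H2) ∨ (δ = -1 ∧ p ≤ 2 ∧ H2 ≤ K2))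
    (apos : ∀ s, 0 < a s) (bpos : ∀ s, 0 < b s)
    (ha : ∀ s, HasDerivAt a (α s / a s) s) (hα : ∀ s, HasDerivAt α H2 s)
    (hb : ∀ s, HasDerivAt b (β s / b s) s) (hβ : ∀ s, HasDerivAt β K2 s)
    (hαH : ∀ s, (α s / a s) ^ 2 ≤ H2) (hβK : ∀ s, (β s / b s) ^ 2 ≤ K2) :
    δ * bkPhi p (a 1) (b 1) ≤ δ * bkPhi p (a 0) (b 0) +
      δ * (bkX p (a 0) (b 0) * α 0 + bkY p (a 0) (b 0) * β 0) := by
  have p1 : 0 < p - 1 := by linarith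
  have p0 : 0 < p := by linarith
  set K := p * (1 - 1 / p) ^ (p - 1) with hK
  have hKK : K * p ^ (p - 2) = (p - 1) ^ (p - 1) := bk_K p hp
  have K0 : 0 ≤ K := by
    have : 0 ≤ 1 - 1 / p := by rw [sub_nonneg, div_le_one p0]; exact hp.le
    positivity
  have F := fun s => bk_F_deriv p H2 K2 s a α b β (apos s) (bpos s) (ha s) (hα s) (hb s) (hβ s)
  have A := fun s => bk_pow_deriv p H2 s a α (apos s) (ha s) (hα s)
  have B := fun s => bk_pow_deriv p K2 s b β (bpos s) (hb s) (hβ s)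
  have e1 : (p - 1) ^ p = (p - 1) ^ (p - 2) * (p - 1) * (p - 1) := by
    rw [← Real.rpow_add_one p1.ne', ← Real.rpow_add_one p1.ne']; congr 1; ring
  have e2 : (p - 1) ^ (p - 1) = (p - 1) ^ (p - 2) * (p - 1) := by
    rw [← Real.rpow_add_one p1.ne']; congr 1; ring
  have key := bk_glue (fun s => b s - (p - 1) * a s)
    (fun s => (δ * K) * ((b s - (p - 1) * a s) * (a s + b s) ^ (p - 1)))
    (fun s => δ * (b s ^ p - (p - 1) ^ p * a s ^ p))
    (fun s => (δ * K) * (p * (a s + b s) ^ (p - 2) *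
      (β s - (p - 1) * α s - (p - 2) * a s * (β s / b s))))
    (fun s => δ * (p * b s ^ (p - 2) * β s - (p - 1) ^ p * (p * a s ^ (p - 2) * α s)))
    _ _
    (continuous_iff_continuousAt.2 fun s => (hb s).continuousAt.sub
      ((ha s).continuousAt.const_mul _))
    (fun s => (F s).1.const_mul _)
    (fun s => ((B s).1.sub ((A s).1.const_mul _)).const_mul _)
    (fun s => (F s).2.const_mul _)
    (fun s => ((B s).2.sub ((A s).2.const_mul _)).const_mul _)
    ?_ ?_ ?_ ?_
  · have h1 : ∀ s, δ * bkPhi p (a s) (b s) = (if 0 ≤ b s - (p - 1) * a s then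
      (δ * K) * ((b s - (p - 1) * a s) * (a s + b s) ^ (p - 1))
      else δ * (b s ^ p - (p - 1) ^ p * a s ^ p)) := by
      intro s; unfold bkPhi; split_ifs
      · rw [← hK]; ring
      · rfl
    rw [h1, h1]
    refine key.trans_eq ?_
    congr 1
    unfold bkX bkY
    split_ifs
    · rw [← hK]; ring
    · ring
  · intro s _
    have rpos : 0 < a s + b s := add_pos (apos s) (bpos s)
    have t1 : 0 ≤ p * (a s + b s) ^ (p - 3) := by positivity
    have t2 : 0 ≤ (K2 - (β s / b s) ^ 2) / b s :=
      div_nonneg (sub_nonneg.2 (hβK s)) (bpos s).le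
    have t3 : 0 ≤ (p - 1) * (a s * (α s / a s + β s / b s) ^ 2) := by
      have := apos s; positivity
    have t4 : 0 ≤ (a s + b s) * ((a s + b s) * ((K2 - (β s / b s) ^ 2) / b s)) := by positivity
    generalize (K2 - (β s / b s) ^ 2) / b s = c at *
    generalize (α s / a s + β s / b s) ^ 2 = d at *
    generalize a s + b s = r at *
    rcases hδ with ⟨rfl, h2, h3⟩ | ⟨rfl, h2, h3⟩
    · have t5 : 0 ≤ r * ((p - 1) * (H2 - K2)) :=
        mul_nonneg rpos.le (mul_nonneg p1.le (by linarith))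
      have := mul_nonneg (sub_nonneg.2 h2) t3
      have := mul_nonneg (sub_nonneg.2 h2) t4
      rw [one_mul]
      refine mul_nonpos_of_nonneg_of_nonpos K0 (mul_nonpos_of_nonneg_of_nonpos t1 ?_)
      linarith
    · have t5 : 0 ≤ r * ((p - 1) * (K2 - H2)) :=
        mul_nonneg rpos.le (mul_nonneg p1.le (by linarith))
      have := mul_nonneg (sub_nonneg.2 h2) t3
      have := mul_nonneg (sub_nonneg.2 h2) t4
      have : 0 ≤ K * (p * r ^ (p - 3) * (-((p - 1) * (p - 2) * a s * d) +
          r * ((p - 1) * (K2 - H2) - (p - 2) * r * c))) := by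
        refine mul_nonneg K0 (mul_nonneg t1 ?_)
        linarith
      linarith
  · intro s hs
    have hs' : b s ≤ (p - 1) * a s := by linarith
    have aps := apos s
    have bps := bpos s
    have hα1 := hαH s
    have hβ1 := hβK s
    have hα0 := sq_nonneg (α s / a s)
    have hβ0 := sq_nonneg (β s / b s)
    generalize (α s / a s) ^ 2 = A2 at *
    generalize (β s / b s) ^ 2 = B2 at *
    have Apos : 0 < a s ^ (p - 2) := Real.rpow_pos_of_pos aps _
    have Bpos : 0 < b s ^ (p - 2) := Real.rpow_pos_of_pos bps _
    have Ppos : 0 < (p - 1) ^ (p - 2) := Real.rpow_pos_of_pos p1 _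
    rw [e1]
    rcases hδ with ⟨rfl, h2, h3⟩ | ⟨rfl, h2, h3⟩
    · have h4 : b s ^ (p - 2) ≤ (p - 1) ^ (p - 2) * a s ^ (p - 2) := by
        rw [← Real.mul_rpow p1.le aps.le]
        exact Real.rpow_le_rpow bps.le hs' (by linarith)
      have i1 : b s ^ (p - 2) * ((p - 2) * B2 + K2) ≤
          ((p - 1) ^ (p - 2) * a s ^ (p - 2)) * ((p - 1) * H2) := by
        apply mul_le_mul h4 _ _ (by positivity)
        · nlinarith
        · have := mul_nonneg (sub_nonneg.2 h2) hβ0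
          linarith
      have i2 : ((p - 1) ^ (p - 2) * a s ^ (p - 2)) * ((p - 1) * H2) ≤
          ((p - 1) ^ (p - 2) * a s ^ (p - 2)) * ((p - 1) * (p - 1) * ((p - 2) * A2 + H2)) := by
        apply mul_le_mul_of_nonneg_left _ (by positivity)
        rw [mul_assoc]
        apply mul_le_mul_of_nonneg_left _ p1.le
        have := mul_nonneg (sub_nonneg.2 h2) hα0
        nlinarith
      have := mul_le_mul_of_nonneg_left (i1.trans i2) p0.le
      linarith
    · have h4 : (p - 1) ^ (p - 2) * a s ^ (p - 2) ≤ b s ^ (p - 2) := by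
        rw [← Real.mul_rpow p1.le aps.le]
        exact Real.rpow_le_rpow_of_nonpos bps hs' (by linarith)
      have i1 : ((p - 1) ^ (p - 2) * a s ^ (p - 2)) * ((p - 1) * K2) ≤
          b s ^ (p - 2) * ((p - 2) * B2 + K2) := by
        apply mul_le_mul h4 _ _ (by positivity)
        · nlinarith
        · apply mul_nonneg p1.le; linarith
      have i2 : ((p - 1) ^ (p - 2) * a s ^ (p - 2)) * ((p - 1) * (p - 1) * ((p - 2) * A2 + H2)) ≤
         ((p - 1) ^ (p - 2) * a s ^ (p - 2)) * ((p - 1) * K2) := by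
        apply mul_le_mul_of_nonneg_left _ (by positivity)
        rw [mul_assoc]
        apply mul_le_mul_of_nonneg_left _ p1.le
        have := mul_nonneg (sub_nonneg.2 h2) hα0
        nlinarith
      have := mul_le_mul_of_nonneg_left (i2.trans i1) p0.le
      linarith
  · intro s hs
    have hs' : b s = (p - 1) * a s := by linarith
    rw [hs', Real.mul_rpow p1.le (apos s).le]
    ring
  · intro s hs
    have hs' : b s = (p - 1) * a s := by linarith
    have aps := apos s
    have r1 : a s + (p - 1) * a s = p * a s := by ring
    beta_reduce
    rw [hs', r1, Real.mul_rpow p1.le (apos s).le, Real.mul_rpow p0.le (apos s).le, e1]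
    have : K * p ^ (p - 2) = (p - 1) ^ (p - 2) * (p - 1) := by rw [hKK, e2]
    calc _ = δ * (K * p ^ (p - 2)) * (p * a s ^ (p - 2) * (β s - (p - 1) * α s - (p - 2) * a s * (β s / ((p - 1) * a s)))) := by ring
      _ = _ := by
        rw [this]; field_simp; ring

lemma bk_majorant (p : ℝ) (hp : 1 < p) (a b : ℝ) (ha : 0 ≤ a) (hb : 0 ≤ b) :
    (2 ≤ p → b ^ p - (p - 1) ^ p * a ^ p ≤ bkPhi p a b) ∧
    (p ≤ 2 → bkPhi p a b ≤ b ^ p - (p - 1) ^ p * a ^ p) := by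
  have p1 : 0 < p - 1 := by linarith
  have p0 : 0 < p := by linarith
  unfold bkPhi
  split_ifs with h
  swap
  · exact ⟨fun _ => le_rfl, fun _ => le_rfl⟩
  rcases hb.eq_or_lt with rfl | hb
  · have : a = 0 := by nlinarith
    subst this
    simp [Real.zero_rpow p0.ne', Real.zero_rpow p1.ne']
  set K := p * (1 - 1 / p) ^ (p - 1) with hK
  have hKK : K * p ^ (p - 2) = (p - 1) ^ (p - 1) := bk_K p hp
  set c := b / (p - 1) with hc
  have hcb : (p - 1) * c = b := by rw [hc]; field_simp
  have c0 : 0 < c := by positivity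
  have hac : a ≤ c := by rw [hc, le_div_iff₀ p1]; linarith
  set D : ℝ → ℝ := fun t => K * ((b - (p - 1) * t) * (t + b) ^ (p - 1))
    - (b ^ p - (p - 1) ^ p * t ^ p) with hD
  have Dc : D c = 0 := by
    simp only [hD]
    rw [hcb, ← Real.mul_rpow p1.le c0.le, hcb]; simp
  have Dcont : ContinuousOn D (Set.Icc 0 c) := by
    apply Continuous.continuousOn
    have : Continuous fun t : ℝ => (t + b) ^ (p - 1) :=
      (continuous_id.add continuous_const).rpow_const (fun _ => Or.inr p1.le)
    have h2 : Continuous fun t : ℝ => t ^ p :=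
      continuous_id.rpow_const (fun _ => Or.inr p0.le)
    fun_prop
  have Dd : ∀ t, 0 < t → HasDerivAt D
      (p * (p - 1) * (p - 1) ^ (p - 1) * t * (t ^ (p - 2) - ((t + b) / p) ^ (p - 2))) t := by
    intro t ht
    have rpos : 0 < t + b := by positivity
    have e0 : p - 1 - 1 = p - 2 := by ring
    have e1 : (t + b) ^ (p - 1) = (t + b) ^ (p - 2) * (t + b) := by
      rw [← Real.rpow_add_one rpos.ne']; congr 1; ring
    have e2 : t ^ (p - 1) = t ^ (p - 2) * t := by
      rw [← Real.rpow_add_one ht.ne']; congr 1; ring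
    have e3 : (p - 1) ^ p = (p - 1) ^ (p - 1) * (p - 1) := by
      rw [← Real.rpow_add_one p1.ne']; congr 1; ring
    have hid := hasDerivAt_id t
    refine HasDerivAt.congr_deriv (((((hid.const_mul (p - 1)).const_sub b).mul
      ((hid.add_const b).rpow_const (p := p - 1) (Or.inl rpos.ne'))).const_mul K).sub
      (((hid.rpow_const (p := p) (Or.inl ht.ne')).const_mul ((p - 1) ^ p)).const_sub (b ^ p))) ?_
    simp only [id]
    rw [e0, e1, e2, e3, Real.div_rpow rpos.le p0.le, ← hKK]
    have : 0 < p ^ (p - 2) := Real.rpow_pos_of_pos p0 _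
    field_simp
    ring
  have hge : ∀ t, t ∈ interior (Set.Icc 0 c) → 0 < t ∧ t ≤ (t + b) / p := by
    intro t ht
    rw [interior_Icc] at ht
    refine ⟨ht.1, ?_⟩
    rw [le_div_iff₀ p0]
    nlinarith [ht.2]
  have hdiff : DifferentiableOn ℝ D (interior (Set.Icc 0 c)) := fun t ht =>
    (Dd t (hge t ht).1).differentiableAt.differentiableWithinAt
  constructor
  · intro h2
    have : AntitoneOn D (Set.Icc 0 c) := by
      refine antitoneOn_of_deriv_nonpos (convex_Icc _ _) Dcont hdiff (fun t ht => ?_)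
      obtain ⟨h3, h4⟩ := hge t ht
      rw [(Dd t h3).deriv]
      refine mul_nonpos_of_nonneg_of_nonpos (by positivity) ?_
      rw [sub_nonpos]
      exact Real.rpow_le_rpow h3.le h4 (by linarith)
    have := this ⟨ha, hac⟩ ⟨c0.le, le_rfl⟩ hac
    rw [Dc] at this
    simp only [hD] at this
    linarith
  · intro h2
    have : MonotoneOn D (Set.Icc 0 c) := by
      refine monotoneOn_of_deriv_nonneg (convex_Icc _ _) Dcont hdiff (fun t ht => ?_)
      obtain ⟨h3, h4⟩ := hge t ht
      rw [(Dd t h3).deriv]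
      refine mul_nonneg (by positivity) ?_
      rw [sub_nonneg]
      exact Real.rpow_le_rpow_of_nonpos h3 h4 (by linarith)
    have := this ⟨ha, hac⟩ ⟨c0.le, le_rfl⟩ hac
    rw [Dc] at this
    simp only [hD] at this
    linarith

lemma bk_cont {Z : Type*} [TopologicalSpace Z] (p : ℝ) (hp : 1 < p) (a b : Z → ℝ)
    (ha : Continuous a) (hb : Continuous b) (ha0 : ∀ z, 0 ≤ a z) :
    Continuous fun z => bkPhi p (a z) (b z) := by
  have p1 : 0 < p - 1 := by linarith
  have p0 : 0 < p := by linarith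
  unfold bkPhi
  have h1 : Continuous fun z => (a z + b z) ^ (p - 1) :=
    (ha.add hb).rpow_const (fun _ => Or.inr p1.le)
  have h2 : Continuous fun z => (a z) ^ p := ha.rpow_const (fun _ => Or.inr p0.le)
  have h3 : Continuous fun z => (b z) ^ p := hb.rpow_const (fun _ => Or.inr p0.le)
  refine Continuous.if_le (by fun_prop) (by fun_prop) (by fun_prop) (by fun_prop) ?_
  intro z hz
  have : b z = (p - 1) * a z := by linarith
  rw [← hz, this, Real.mul_rpow p1.le (ha0 z)]
  ring

open scoped RealInnerProductSpace in
lemma bk_line {H : Type*} [NormedAddCommGroup H] [InnerProductSpace ℝ H] (ε : ℝ) (hε : 0 < ε)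
    (x h : H) (s : ℝ) :
    0 < √(‖x + s • h‖ ^ 2 + ε ^ 2) ∧
    HasDerivAt (fun s : ℝ => √(‖x + s • h‖ ^ 2 + ε ^ 2))
      (⟪x + s • h, h⟫ / √(‖x + s • h‖ ^ 2 + ε ^ 2)) s ∧
    HasDerivAt (fun s : ℝ => ⟪x + s • h, h⟫) (‖h‖ ^ 2) s ∧
    (⟪x + s • h, h⟫ / √(‖x + s • h‖ ^ 2 + ε ^ 2)) ^ 2 ≤ ‖h‖ ^ 2 := by
  have hpos : 0 < ‖x + s • h‖ ^ 2 + ε ^ 2 := by positivity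
  have hl : HasDerivAt (fun s : ℝ => x + s • h) h s := by
    simpa using ((hasDerivAt_id s).smul_const h).const_add x
  refine ⟨Real.sqrt_pos.2 hpos, ?_, ?_, ?_⟩
  · refine HasDerivAt.congr_deriv ((hl.norm_sq.add_const (ε ^ 2)).sqrt hpos.ne') ?_
    have := Real.sqrt_pos.2 hpos
    field_simp
  · refine HasDerivAt.congr_deriv (hl.inner ℝ (hasDerivAt_const s h)) ?_
    simp [real_inner_self_eq_norm_sq]
  · rw [div_pow, Real.sq_sqrt hpos.le, div_le_iff₀ hpos]
    have h1 := abs_real_inner_le_norm (x + s • h) h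
    have h2 : ⟪x + s • h, h⟫ ^ 2 ≤ (‖x + s • h‖ * ‖h‖) ^ 2 := by
      rw [← sq_abs ⟪x + s • h, h⟫]
      gcongr
    nlinarith [mul_nonneg (sq_nonneg ‖h‖) (sq_nonneg ε)]

open scoped RealInnerProductSpace in
lemma bk_step {H : Type*} [NormedAddCommGroup H] [InnerProductSpace ℝ H] (p : ℝ) (hp : 1 < p)
    (ε : ℝ) (hε : 0 < ε) (δ : ℝ) (x y h k : H)
    (hδ : (δ = 1 ∧ 2 ≤ p ∧ ‖k‖ ≤ ‖h‖) ∨ (δ = -1 ∧ p ≤ 2 ∧ ‖h‖ ≤ ‖k‖)) :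
    δ * bkPhi p (√(‖x + h‖ ^ 2 + ε ^ 2)) (√(‖y + k‖ ^ 2 + ε ^ 2)) ≤
      δ * bkPhi p (√(‖x‖ ^ 2 + ε ^ 2)) (√(‖y‖ ^ 2 + ε ^ 2)) +
      δ * (bkX p (√(‖x‖ ^ 2 + ε ^ 2)) (√(‖y‖ ^ 2 + ε ^ 2)) * ⟪x, h⟫ +
        bkY p (√(‖x‖ ^ 2 + ε ^ 2)) (√(‖y‖ ^ 2 + ε ^ 2)) * ⟪y, k⟫) := by
  have a := bk_line ε hε x h
  have b := bk_line ε hε y k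
  have := bk_core p hp δ (‖h‖ ^ 2) (‖k‖ ^ 2) _ _ _ _
    (by
      rcases hδ with ⟨h1, h2, h3⟩ | ⟨h1, h2, h3⟩
      · left; exact ⟨h1, h2, by gcongr⟩
      · right; exact ⟨h1, h2, by gcongr⟩)
    (fun s => (a s).1) (fun s => (b s).1) (fun s => (a s).2.1) (fun s => (a s).2.2.1)
    (fun s => (b s).2.1) (fun s => (b s).2.2.1) (fun s => (a s).2.2.2) (fun s => (b s).2.2.2)
  simpa using this

lemma bk_meas {Ω E F : Type*} {m : MeasurableSpace Ω} [TopologicalSpace E]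
    [TopologicalSpace.MetrizableSpace E] [TopologicalSpace F] (f : Ω → E)
    (hf : StronglyMeasurable f) (hfin : (Set.range f).Finite) (g : E → F) :
    StronglyMeasurable (fun ω => g (f ω)) := by
  let φ : SimpleFunc Ω E := ⟨f, fun c => hf.measurableSet_eq_fun stronglyMeasurable_const, hfin⟩
  exact (φ.map g).stronglyMeasurable

lemma bk_bdd {Ω E F : Type*} [SeminormedAddCommGroup F] (f : Ω → E)
    (hfin : (Set.range f).Finite) (g : E → F) : ∃ C, ∀ ω, ‖g (f ω)‖ ≤ C := by
  obtain ⟨C, hC⟩ := (hfin.image (fun e => ‖g e‖)).bddAbove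
  exact ⟨C, fun ω => hC ⟨f ω, ⟨ω, rfl⟩, rfl⟩⟩

open scoped RealInnerProductSpace in
lemma bk_orth {H : Type*} [NormedAddCommGroup H]
    [InnerProductSpace ℝ H] [CompleteSpace H]
    {Ω : Type*} {m0 : MeasurableSpace Ω} (μ : Measure Ω) [IsProbabilityMeasure μ]
    (ℱ : Filtration ℕ m0) (M : ℕ → Ω → H) (hM : Martingale M ℱ μ) (t : ℕ) (A : Ω → H)
    (hA : StronglyMeasurable[ℱ t] A) (C : ℝ) (hC : ∀ ω, ‖A ω‖ ≤ C) :
    Integrable (fun ω => ⟪A ω, M (t + 1) ω - M t ω⟫) μ ∧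
    ∫ ω, ⟪A ω, M (t + 1) ω - M t ω⟫ ∂μ = 0 := by
  have hD : Integrable (fun ω => M (t + 1) ω - M t ω) μ :=
    (hM.integrable (t + 1)).sub (hM.integrable t)
  have hA' : AEStronglyMeasurable A μ := (hA.mono (ℱ.le t)).aestronglyMeasurable
  have hInteg : Integrable (fun ω => ⟪A ω, M (t + 1) ω - M t ω⟫) μ := by
    refine (hD.norm.const_mul C).mono' (hA'.inner hD.1) (Eventually.of_forall fun ω => ?_)
    exact (norm_inner_le_norm _ _).trans (by gcongr; exact hC ω)
  refine ⟨hInteg, ?_⟩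
  have h1 : μ[fun ω => M (t + 1) ω - M t ω | ℱ t] =ᵐ[μ] 0 := by
    have := condExp_sub (hM.integrable (t + 1)) (hM.integrable t) (ℱ t)
    filter_upwards [this, hM.2 t (t + 1) (Nat.le_succ t), hM.2 t t le_rfl] with ω h1 h2 h3
    have : (μ[fun ω => M (t + 1) ω - M t ω | ℱ t]) ω = (μ[M (t + 1) - M t | ℱ t]) ω := rfl
    rw [this, h1, Pi.sub_apply, h2, h3]; simp
  have h2 := condExp_bilin_of_stronglyMeasurable_left (m := ℱ t) (μ := μ) (innerSL ℝ : H →L[ℝ] H →L[ℝ] ℝ)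
    (f := A) (g := fun ω => M (t + 1) ω - M t ω) hA hInteg hD
  rw [← integral_condExp (ℱ.le t)]
  refine (integral_congr_ae (g := fun _ => (0:ℝ)) ?_).trans (by simp)
  filter_upwards [h1, h2] with ω e1 e2
  refine e2.trans ?_
  rw [e1]; simp

open scoped RealInnerProductSpace in
lemma bk_mart {H : Type*} [NormedAddCommGroup H]
    [InnerProductSpace ℝ H] [CompleteSpace H]
    {Ω : Type*} {m0 : MeasurableSpace Ω} (μ : Measure Ω) [IsProbabilityMeasure μ]
    (ℱ : Filtration ℕ m0) (M1 M2 : ℕ → Ω → H)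
    (hM1 : Martingale M1 ℱ μ) (hM2 : Martingale M2 ℱ μ)
    (hs : ∀ t, (Set.range fun ω => (M1 t ω, M2 t ω)).Finite)
    (x₁ x₂ : H) (hM10 : ∀ ω, M1 0 ω = x₁) (hM20 : ∀ ω, M2 0 ω = x₂)
    (hsub : ∀ t : ℕ, ∀ᵐ ω ∂μ, ‖M2 (t + 1) ω - M2 t ω‖ ≤ ‖M1 (t + 1) ω - M1 t ω‖)
    (ψ X Y : H → H → ℝ)
    (hψ : ∀ x y h k, ‖k‖ ≤ ‖h‖ → ψ (x + h) (y + k) ≤ ψ x y + (X x y * ⟪x, h⟫ + Y x y * ⟪y, k⟫))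
    (T : ℕ) : ∫ ω, ψ (M1 T ω) (M2 T ω) ∂μ ≤ ψ x₁ x₂ := by
  have hsm : ∀ t, StronglyMeasurable[ℱ t] (fun ω => (M1 t ω, M2 t ω)) := fun t =>
    (hM1.1 t).prodMk (hM2.1 t)
  have hInteg : ∀ t, Integrable (fun ω => ψ (M1 t ω) (M2 t ω)) μ := by
    intro t
    obtain ⟨C, hC⟩ := bk_bdd _ (hs t) (fun z : H × H => ψ z.1 z.2)
    exact Integrable.of_bound ((bk_meas _ (hsm t) (hs t)
      (fun z : H × H => ψ z.1 z.2)).mono (ℱ.le t)).aestronglyMeasurable C (Eventually.of_forall hC)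
  induction T with
  | zero => simp [hM10, hM20]
  | succ t ih =>
    refine le_trans ?_ ih
    obtain ⟨C1, hC1⟩ := bk_bdd _ (hs t) (fun z : H × H => X z.1 z.2 • z.1)
    obtain ⟨C2, hC2⟩ := bk_bdd _ (hs t) (fun z : H × H => Y z.1 z.2 • z.2)
    obtain ⟨i1, z1⟩ := bk_orth μ ℱ M1 hM1 t _ (bk_meas _ (hsm t) (hs t)
      (fun z : H × H => X z.1 z.2 • z.1)) C1 hC1
    obtain ⟨i2, z2⟩ := bk_orth μ ℱ M2 hM2 t _ (bk_meas _ (hsm t) (hs t)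
      (fun z : H × H => Y z.1 z.2 • z.2)) C2 hC2
    have : ∫ ω, ψ (M1 t ω) (M2 t ω) ∂μ = ∫ ω, (ψ (M1 t ω) (M2 t ω) +
        (⟪X (M1 t ω) (M2 t ω) • M1 t ω, M1 (t + 1) ω - M1 t ω⟫ +
        ⟪Y (M1 t ω) (M2 t ω) • M2 t ω, M2 (t + 1) ω - M2 t ω⟫)) ∂μ := by
      have i3 : Integrable (fun ω => ⟪X (M1 t ω) (M2 t ω) • M1 t ω, M1 (t + 1) ω - M1 t ω⟫ +
        ⟪Y (M1 t ω) (M2 t ω) • M2 t ω, M2 (t + 1) ω - M2 t ω⟫) μ := i1.add i2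
      rw [integral_add (hInteg t) i3, integral_add i1 i2, z1, z2]; simp
    rw [this]
    refine integral_mono_ae (hInteg (t + 1)) ((hInteg t).add (i1.add i2)) ?_
    filter_upwards [hsub t] with ω hω
    have := hψ (M1 t ω) (M2 t ω) _ _ hω
    simpa [real_inner_smul_left] using this

lemma bk_limit {H : Type*} [NormedAddCommGroup H]
    {Ω : Type*} {m0 : MeasurableSpace Ω} (μ : Measure Ω) [IsProbabilityMeasure μ]
    (f : Ω → H × H) (hf : StronglyMeasurable f)
    (hs : (Set.range f).Finite) (x₁ x₂ : H) (ψ : ℝ → H × H → ℝ)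
    (hc : ∀ z, Continuous fun ε => ψ ε z)
    (h : ∀ ε, 0 < ε → ∫ ω, ψ ε (f ω) ∂μ ≤ ψ ε (x₁, x₂)) :
    ∫ ω, ψ 0 (f ω) ∂μ ≤ ψ 0 (x₁, x₂) := by
  have hbd : ∃ C, ∀ ε ∈ Set.Icc (0:ℝ) 1, ∀ ω, ‖ψ ε (f ω)‖ ≤ C := by
    have h1 : ∀ z, ∃ C, ∀ ε ∈ Set.Icc (0:ℝ) 1, ‖ψ ε z‖ ≤ C := fun z =>
      isCompact_Icc.exists_bound_of_continuousOn (hc z).continuousOn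
    choose C hC using h1
    obtain ⟨D, hD⟩ := bk_bdd f hs C
    exact ⟨D, fun ε hε ω => (hC _ ε hε).trans ((le_abs_self _).trans (hD ω))⟩
  obtain ⟨C, hC⟩ := hbd
  have hI : ∀ᶠ ε in 𝓝[>] (0:ℝ), ε ∈ Set.Ioc (0:ℝ) 1 := Ioc_mem_nhdsGT zero_lt_one
  have t1 : Tendsto (fun ε => ∫ ω, ψ ε (f ω) ∂μ) (𝓝[>] 0) (𝓝 (∫ ω, ψ 0 (f ω) ∂μ)) := by
    refine tendsto_integral_filter_of_dominated_convergence (fun _ => C) ?_ ?_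
      (integrable_const C) ?_
    · exact Eventually.of_forall fun ε => (bk_meas f hf hs (ψ ε)).aestronglyMeasurable
    · filter_upwards [hI] with ε hε
      exact Eventually.of_forall (hC ε ⟨hε.1.le, hε.2⟩)
    · exact Eventually.of_forall fun ω => ((hc (f ω)).tendsto 0).mono_left nhdsWithin_le_nhds
  have t2 : Tendsto (fun ε => ψ ε (x₁, x₂)) (𝓝[>] 0) (𝓝 (ψ 0 (x₁, x₂))) :=
    ((hc _).tendsto 0).mono_left nhdsWithin_le_nhds
  exact le_of_tendsto_of_tendsto t1 t2 (hI.mono fun ε hε => h ε hε.1)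

set_option maxHeartbeats 2000000 in
/-- Burkholder's inequality for differentially subordinate simple
martingales: with `p* = max(p, p/(p-1))`, if `M²` is differentially subordinate to `M¹`
and `(M¹₀, M²₀) = (x₁, x₂)`, then `E[|M²_T|^p - (p*-1)^p |M¹_T|^p] ≤ u(x₁,x₂)`, where
`u(x₁,x₂) = p(1-1/p*)^{p-1}(|x₂| - (p*-1)|x₁|)(|x₁|+|x₂|)^{p-1}` if
(`p ≤ 2` and `|x₂| ≤ (p*-1)|x₁|`) or (`2 ≤ p` and `|x₂| > (p*-1)|x₁|`), and
`u(x₁,x₂) = |x₂|^p - (p*-1)^p|x₁|^p` otherwise; in particular, for `x₁ = x₂`,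
`‖M²_T‖_{L^p} ≤ (p*-1)‖M¹_T‖_{L^p}`. -/
theorem burkholder_subordinate_inequality {H : Type*} [NormedAddCommGroup H]
    [InnerProductSpace ℝ H] [CompleteSpace H] (p : ℝ) (hp : 1 < p)
    {Ω : Type*} {m0 : MeasurableSpace Ω} (μ : Measure Ω) [IsProbabilityMeasure μ]
    (ℱ : Filtration ℕ m0) (M1 M2 : ℕ → Ω → H)
    (hM1 : Martingale M1 ℱ μ) (hM2 : Martingale M2 ℱ μ)
    (hs1 : (Set.range fun q : ℕ × Ω => M1 q.1 q.2).Finite)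
    (hs2 : (Set.range fun q : ℕ × Ω => M2 q.1 q.2).Finite)
    (x₁ x₂ : H) (hM10 : ∀ ω, M1 0 ω = x₁) (hM20 : ∀ ω, M2 0 ω = x₂)
    (hsub : ∀ t : ℕ, ∀ᵐ ω ∂μ, ‖M2 (t + 1) ω - M2 t ω‖ ≤ ‖M1 (t + 1) ω - M1 t ω‖)
    (T : ℕ) :
    (∫ ω, (‖M2 T ω‖ ^ p - (max p (p / (p - 1)) - 1) ^ p * ‖M1 T ω‖ ^ p) ∂μ)
      ≤ (if (p ≤ 2 ∧ ‖x₂‖ ≤ (max p (p / (p - 1)) - 1) * ‖x₁‖)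
            ∨ (2 ≤ p ∧ (max p (p / (p - 1)) - 1) * ‖x₁‖ < ‖x₂‖)
         then p * (1 - 1 / max p (p / (p - 1))) ^ (p - 1) *
              (‖x₂‖ - (max p (p / (p - 1)) - 1) * ‖x₁‖) * (‖x₁‖ + ‖x₂‖) ^ (p - 1)
         else ‖x₂‖ ^ p - (max p (p / (p - 1)) - 1) ^ p * ‖x₁‖ ^ p) ∧
    (x₁ = x₂ →
      (∫ ω, ‖M2 T ω‖ ^ p ∂μ) ^ (1 / p)
        ≤ (max p (p / (p - 1)) - 1) * (∫ ω, ‖M1 T ω‖ ^ p ∂μ) ^ (1 / p)) := by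
  have p1 : 0 < p - 1 := by linarith
  have p0 : 0 < p := by linarith
  have hs : ∀ t, (Set.range fun ω => (M1 t ω, M2 t ω)).Finite := by
    intro t
    refine (hs1.prod hs2).subset ?_
    rintro _ ⟨ω, rfl⟩
    exact ⟨⟨(t, ω), rfl⟩, ⟨(t, ω), rfl⟩⟩
  have hsm : StronglyMeasurable (fun ω => (M1 T ω, M2 T ω)) :=
    ((hM1.1 T).mono (ℱ.le T)).prodMk ((hM2.1 T).mono (ℱ.le T))
  have intf : ∀ g : H × H → ℝ, Integrable (fun ω => g (M1 T ω, M2 T ω)) μ := by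
    intro g
    obtain ⟨C, hC⟩ := bk_bdd _ (hs T) g
    exact Integrable.of_bound (bk_meas _ hsm (hs T) g).aestronglyMeasurable C
      (Eventually.of_forall hC)
  have hc1 : 1 ≤ max p (p / (p - 1)) - 1 := by
    rcases le_total 2 p with h | h
    · have := le_max_left p (p / (p - 1)); linarith
    · have := le_max_right p (p / (p - 1))
      have : 2 ≤ p / (p - 1) := by rw [le_div_iff₀ p1]; linarith
      linarith
  have hmain : (∫ ω, (‖M2 T ω‖ ^ p - (max p (p / (p - 1)) - 1) ^ p * ‖M1 T ω‖ ^ p) ∂μ)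
      ≤ (if (p ≤ 2 ∧ ‖x₂‖ ≤ (max p (p / (p - 1)) - 1) * ‖x₁‖)
            ∨ (2 ≤ p ∧ (max p (p / (p - 1)) - 1) * ‖x₁‖ < ‖x₂‖)
         then p * (1 - 1 / max p (p / (p - 1))) ^ (p - 1) *
              (‖x₂‖ - (max p (p / (p - 1)) - 1) * ‖x₁‖) * (‖x₁‖ + ‖x₂‖) ^ (p - 1)
         else ‖x₂‖ ^ p - (max p (p / (p - 1)) - 1) ^ p * ‖x₁‖ ^ p) := by
    rcases le_or_gt 2 p with h2 | h2
    · have hmax : max p (p / (p - 1)) = p := by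
        apply max_eq_left; rw [div_le_iff₀ p1]; nlinarith
      rw [hmax]
      have key := bk_limit μ _ hsm (hs T) x₁ x₂
        (fun ε z => bkPhi p (√(‖z.1‖ ^ 2 + ε ^ 2)) (√(‖z.2‖ ^ 2 + ε ^ 2)))
        (fun z => bk_cont p hp _ _ (by fun_prop) (by fun_prop) (fun _ => Real.sqrt_nonneg _))
        (fun ε hε => bk_mart μ ℱ M1 M2 hM1 hM2 hs x₁ x₂ hM10 hM20 hsub
          (fun x y => bkPhi p (√(‖x‖ ^ 2 + ε ^ 2)) (√(‖y‖ ^ 2 + ε ^ 2)))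
          (fun x y => bkX p (√(‖x‖ ^ 2 + ε ^ 2)) (√(‖y‖ ^ 2 + ε ^ 2)))
          (fun x y => bkY p (√(‖x‖ ^ 2 + ε ^ 2)) (√(‖y‖ ^ 2 + ε ^ 2)))
          (fun x y h k hk => by
            simpa using bk_step p hp ε hε 1 x y h k (Or.inl ⟨rfl, h2, hk⟩)) T)
      simp only [ne_eq, OfNat.ofNat_ne_zero, not_false_eq_true, zero_pow, add_zero,
        Real.sqrt_sq (norm_nonneg _)] at key
      refine (integral_mono (intf fun z => ‖z.2‖ ^ p - (p - 1) ^ p * ‖z.1‖ ^ p)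
        (intf fun z => bkPhi p ‖z.1‖ ‖z.2‖) (fun ω =>
          (bk_majorant p hp _ _ (norm_nonneg _) (norm_nonneg _)).1 h2)).trans (key.trans_eq ?_)
      generalize hA : ‖x₁‖ = a
      generalize hB : ‖x₂‖ = b
      have a0 : 0 ≤ a := hA ▸ norm_nonneg _
      have b0 : 0 ≤ b := hB ▸ norm_nonneg _
      by_cases hb : (p - 1) * a < b
      · rw [if_pos (Or.inr ⟨h2, hb⟩), bkPhi, if_pos (by linarith)]
      · have e : bkPhi p a b = b ^ p - (p - 1) ^ p * a ^ p := by
          rcases (not_lt.1 hb).eq_or_lt with h | h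
          · rw [bkPhi, if_pos (by linarith), h, Real.mul_rpow p1.le a0]; ring
          · rw [bkPhi, if_neg (by linarith)]
        rw [e]
        split_ifs with hif
        · rcases hif with hif | hif
          · have : p = 2 := le_antisymm hif.1 h2
            subst this
            norm_num
            ring
          · exact absurd hif.2 hb
        · rfl
    · have hmax : max p (p / (p - 1)) = p / (p - 1) := by
        apply max_eq_right; rw [le_div_iff₀ p1]; nlinarith
      rw [hmax]
      have hc : p / (p - 1) - 1 = (p - 1)⁻¹ := by field_simp; ring
      have hd : 1 - 1 / (p / (p - 1)) = 1 / p := by field_simp; ring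
      rw [hc, hd]
      have hpp : 0 < (p - 1) ^ p := Real.rpow_pos_of_pos p1 _
      have key := bk_limit μ _ hsm (hs T) x₁ x₂
        (fun ε z => ((p - 1) ^ p)⁻¹ *
          (-1 * bkPhi p (√(‖z.2‖ ^ 2 + ε ^ 2)) (√(‖z.1‖ ^ 2 + ε ^ 2))))
        (fun z => continuous_const.mul (continuous_const.mul
          (bk_cont p hp _ _ (by fun_prop) (by fun_prop) (fun _ => Real.sqrt_nonneg _))))
        (fun ε hε => bk_mart μ ℱ M1 M2 hM1 hM2 hs x₁ x₂ hM10 hM20 hsub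
          (fun x y => ((p - 1) ^ p)⁻¹ * (-1 * bkPhi p (√(‖y‖ ^ 2 + ε ^ 2)) (√(‖x‖ ^ 2 + ε ^ 2))))
          (fun x y => ((p - 1) ^ p)⁻¹ * (-1 * bkY p (√(‖y‖ ^ 2 + ε ^ 2)) (√(‖x‖ ^ 2 + ε ^ 2))))
          (fun x y => ((p - 1) ^ p)⁻¹ * (-1 * bkX p (√(‖y‖ ^ 2 + ε ^ 2)) (√(‖x‖ ^ 2 + ε ^ 2))))
          (fun x y h k hk => by
            have := mul_le_mul_of_nonneg_left
              (bk_step p hp ε hε (-1) y x k h (Or.inr ⟨rfl, h2.le, hk⟩)) (inv_nonneg.2 hpp.le)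
            refine this.trans_eq ?_
            ring) T)
      simp only [ne_eq, OfNat.ofNat_ne_zero, not_false_eq_true, zero_pow, add_zero,
        Real.sqrt_sq (norm_nonneg _)] at key
      refine (integral_mono (intf fun z => ‖z.2‖ ^ p - ((p - 1)⁻¹) ^ p * ‖z.1‖ ^ p)
        (intf fun z => ((p - 1) ^ p)⁻¹ * (-1 * bkPhi p ‖z.2‖ ‖z.1‖)) (fun ω => ?_)).trans
          (key.trans_eq ?_)
      · have := mul_le_mul_of_nonneg_left
          ((bk_majorant p hp ‖M2 T ω‖ ‖M1 T ω‖ (norm_nonneg _) (norm_nonneg _)).2 h2.le)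
          (inv_nonneg.2 hpp.le)
        have e : ((p - 1) ^ p)⁻¹ * (‖M1 T ω‖ ^ p - (p - 1) ^ p * ‖M2 T ω‖ ^ p) =
            ((p - 1) ^ p)⁻¹ * ‖M1 T ω‖ ^ p - ‖M2 T ω‖ ^ p := by field_simp
        rw [e] at this
        simp only
        rw [Real.inv_rpow p1.le]
        linarith
      · generalize ‖x₁‖ = a
        generalize ‖x₂‖ = b
        by_cases hb : b ≤ (p - 1)⁻¹ * a
        · have hb' : 0 ≤ a - (p - 1) * b := by
            have := mul_le_mul_of_nonneg_left hb p1.le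
            rw [mul_inv_cancel_left₀ p1.ne'] at this
            linarith
          rw [if_pos (Or.inl ⟨h2.le, hb⟩), bkPhi, if_pos hb']
          have e0 : 1 - 1 / p = (p - 1) * (1 / p) := by field_simp
          have e1 : (p - 1) ^ p = (p - 1) ^ (p - 1) * (p - 1) := by
            rw [← Real.rpow_add_one p1.ne']; congr 1; ring
          have : 0 < (p - 1) ^ (p - 1) := Real.rpow_pos_of_pos p1 _
          rw [e0, Real.mul_rpow p1.le (by positivity), e1, add_comm b a]
          field_simp
          ring
        · have hb' : ¬ 0 ≤ a - (p - 1) * b := by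
            intro h
            apply hb
            rw [← mul_le_mul_iff_right₀ p1, mul_inv_cancel_left₀ p1.ne']
            linarith
          rw [if_neg, bkPhi, if_neg hb', Real.inv_rpow p1.le]
          · field_simp
            ring
          · rintro (h | h)
            · exact hb h.2
            · linarith [h.1]
  refine ⟨hmain, ?_⟩
  rintro rfl
  have hz : 0 ≤ 1 - 1 / max p (p / (p - 1)) := by
    have : 1 ≤ max p (p / (p - 1)) := by linarith
    rw [sub_nonneg, div_le_one (by linarith)]; exact this
  generalize max p (p / (p - 1)) = m at *
  set c := m - 1 with hc
  have hle : (∫ ω, (‖M2 T ω‖ ^ p - c ^ p * ‖M1 T ω‖ ^ p) ∂μ) ≤ 0 := by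
    refine hmain.trans ?_
    have n0 := norm_nonneg x₁
    split_ifs
    · refine mul_nonpos_of_nonpos_of_nonneg (mul_nonpos_of_nonneg_of_nonpos ?_ ?_) ?_
      · positivity
      · nlinarith
      · positivity
    · have h1 : 1 ≤ c ^ p := Real.one_le_rpow hc1 p0.le
      have h2 : 0 ≤ ‖x₁‖ ^ p := by positivity
      nlinarith
  rw [integral_sub (intf fun z => ‖z.2‖ ^ p) (intf fun z => c ^ p * ‖z.1‖ ^ p),
    integral_const_mul] at hle
  have c0 : 0 ≤ c := by linarith
  have i1 : 0 ≤ ∫ ω, ‖M1 T ω‖ ^ p ∂μ := integral_nonneg fun _ => by positivity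
  have i2 : 0 ≤ ∫ ω, ‖M2 T ω‖ ^ p ∂μ := integral_nonneg fun _ => by positivity
  calc (∫ ω, ‖M2 T ω‖ ^ p ∂μ) ^ (1 / p)
      ≤ (c ^ p * ∫ ω, ‖M1 T ω‖ ^ p ∂μ) ^ (1 / p) :=
        Real.rpow_le_rpow i2 (by linarith) (by positivity)
    _ = c * (∫ ω, ‖M1 T ω‖ ^ p ∂μ) ^ (1 / p) := by
        rw [Real.mul_rpow (by positivity) i1, ← Real.rpow_mul c0, mul_one_div_cancel p0.ne',
          Real.rpow_one]
end

section
/- Let k, n, T ∈ ℕ, X = ℝⁿ and x₀ ∈ X. Let μ be a probability measure on X^{T+1} under which the coordinate process M₀,…,M_T is a martingale with respect to its natural filtration and M₀ = x₀ a.s. Let A ⊆ X^{T+1} be a Borel set with μ(A) = 1, and let f : X^{T+1} → ℝᵏ be Borel measurable with ∫|f| dμ < ∞. Then there exists a probability measure ν on X^{T+1} under which the coordinate process is a martingale in its natural filtration starting at x₀, such that ν is supported on a finite set S ⊆ A with card S ≤ (n+k+1)^T, and ∫ f dν = ∫ f dμ. -/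
open MeasureTheory

theorem mt_separate {V : Type*} [NormedAddCommGroup V] [NormedSpace ℝ V] [FiniteDimensional ℝ V]
    (C : Set V) (hC : Convex ℝ C) (hne : C.Nonempty) (h0 : (0 : V) ∉ C) :
    ∃ l : V →L[ℝ] ℝ, l ≠ 0 ∧ ∀ c ∈ C, 0 ≤ l c := by
  by_cases hi : (interior C).Nonempty
  · obtain ⟨l, hl⟩ := geometric_hahn_banach_point_open hC.interior isOpen_interior
      (fun h => h0 (interior_subset h))
    refine ⟨l, ?_, ?_⟩
    · rintro rfl
      obtain ⟨x, hx⟩ := hi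
      simpa using hl x hx
    · intro c hc
      have h1 : c ∈ closure (interior C) := by
        rw [hC.closure_interior_eq_closure_of_nonempty_interior hi]
        exact subset_closure hc
      have h2 : closure (interior C) ⊆ {x | 0 ≤ l x} := by
        apply closure_minimal
        · intro x hx
          have := hl x hx
          simp at this
          exact this.le
        · exact isClosed_le continuous_const l.continuous
      exact h2 h1
  · rw [hC.interior_nonempty_iff_affineSpan_eq_top] at hi
    obtain ⟨c0, hc0⟩ := hne
    have hdir : (affineSpan ℝ C).direction < ⊤ := by
      rw [lt_top_iff_ne_top]
      intro h
      exact hi ((AffineSubspace.direction_eq_top_iff_of_nonempty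
        ⟨c0, subset_affineSpan ℝ C hc0⟩).1 h)
    obtain ⟨l, hl0, hl⟩ := Submodule.exists_le_ker_of_lt_top _ hdir
    have hconst : ∀ c ∈ C, l c = l c0 := by
      intro c hc
      have : c - c0 ∈ (affineSpan ℝ C).direction :=
        AffineSubspace.vsub_mem_direction (subset_affineSpan ℝ C hc) (subset_affineSpan ℝ C hc0)
      have := hl this
      rw [LinearMap.mem_ker, map_sub] at this
      linarith
    rcases le_total 0 (l c0) with h | h
    · refine ⟨LinearMap.toContinuousLinearMap l, ?_, ?_⟩
      · simpa using hl0
      · intro c hc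
        simpa [hconst c hc] using h
    · refine ⟨-LinearMap.toContinuousLinearMap l, ?_, ?_⟩
      · simpa using hl0
      · intro c hc
        simpa [hconst c hc] using h

theorem mt_zero_mem {Ω : Type*} [MeasurableSpace Ω] (μ : Measure Ω) [IsProbabilityMeasure μ]
    (d : ℕ) : ∀ (V : Type) [NormedAddCommGroup V] [NormedSpace ℝ V] [FiniteDimensional ℝ V]
    (_ : Module.finrank ℝ V = d) (C : Set V) (_ : Convex ℝ C) (g : Ω → V) (_ : Integrable g μ)
    (_ : ∀ᵐ ω ∂μ, g ω ∈ C) (_ : ∫ ω, g ω ∂μ = 0), (0 : V) ∈ C := by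
  induction d with
  | zero =>
    intro V _ _ _ hd C hC g hg hgC h0
    obtain ⟨ω, hω⟩ := hgC.exists
    have := Module.finrank_zero_iff.1 hd
    rwa [Subsingleton.elim (g ω) 0] at hω
  | succ d ih =>
    intro V _ _ _ hd C hC g hg hgC h0
    by_contra hn
    obtain ⟨ω, hω⟩ := hgC.exists
    obtain ⟨l, hl0, hl⟩ := mt_separate C hC ⟨_, hω⟩ hn
    have hint : ∫ ω, l (g ω) ∂μ = 0 := by
      rw [l.integral_comp_comm hg, h0, map_zero]
    have hz : ∀ᵐ ω ∂μ, l (g ω) = 0 := by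
      have := (integral_eq_zero_iff_of_nonneg_ae (μ := μ) (f := fun ω => l (g ω))
        (by filter_upwards [hgC] with ω h using hl _ h) (l.integrable_comp hg)).1 hint
      exact this
    let K : Submodule ℝ V := LinearMap.ker l.toLinearMap
    obtain ⟨P, hP⟩ := Submodule.ClosedComplemented.of_finiteDimensional K
    have hK : Module.finrank ℝ K = d := by
      have h1 : Module.finrank ℝ (LinearMap.range l.toLinearMap) = 1 := by
        have : LinearMap.range l.toLinearMap = ⊤ := by
          apply LinearMap.range_eq_top.2
          apply LinearMap.surjective
          intro h
          apply hl0
          ext x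
          exact LinearMap.congr_fun h x
        rw [this, finrank_top, Module.finrank_self]
      have := LinearMap.finrank_range_add_finrank_ker l.toLinearMap
      change _ + Module.finrank ℝ K = _ at this
      omega
    have key := ih K hK (K.subtype ⁻¹' C) (hC.linear_preimage K.subtype) (fun ω => P (g ω))
      (P.integrable_comp hg) (by
        filter_upwards [hgC, hz] with ω h1 h2
        have := hP ⟨g ω, h2⟩
        simp only [] at this
        simp [this, h1]) (by rw [P.integral_comp_comm hg, h0, map_zero])
    exact hn (by simpa using key)

theorem mt_integral_mem {Ω : Type*} [MeasurableSpace Ω] (μ : Measure Ω) [IsProbabilityMeasure μ]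
    {V : Type} [NormedAddCommGroup V] [NormedSpace ℝ V] [FiniteDimensional ℝ V]
    (C : Set V) (hC : Convex ℝ C) (g : Ω → V) (hg : Integrable g μ)
    (hgC : ∀ᵐ ω ∂μ, g ω ∈ C) : ∫ ω, g ω ∂μ ∈ C := by
  have := mt_zero_mem μ _ V rfl ((fun x => (∫ ω, g ω ∂μ) + x) ⁻¹' C)
    (hC.translate_preimage_right _) (fun ω => g ω - ∫ ω, g ω ∂μ) (hg.sub (integrable_const _))
    (by filter_upwards [hgC] with ω h; simpa using h)
    (by rw [integral_sub hg (integrable_const _)]; simp)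
  simpa using this

/-- One-step Tchakaloff. -/
theorem mt_tchakaloff {Ω : Type*} [MeasurableSpace Ω] [MeasurableSingletonClass Ω] (μ : Measure Ω)
    [IsProbabilityMeasure μ]
    {V : Type} [NormedAddCommGroup V] [NormedSpace ℝ V] [FiniteDimensional ℝ V]
    (A : Set Ω) (g : Ω → V) (hg : Integrable g μ) (hA : ∀ᵐ ω ∂μ, ω ∈ A) :
    ∃ ρ : Measure Ω, IsProbabilityMeasure ρ ∧ (∃ S : Finset Ω, ↑S ⊆ A ∧
      S.card ≤ Module.finrank ℝ V + 1 ∧ ρ (↑S : Set Ω)ᶜ = 0) ∧ ∫ ω, g ω ∂ρ = ∫ ω, g ω ∂μ := by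
  classical
  have h1 := mt_integral_mem μ (convexHull ℝ (g '' A)) (convex_convexHull _ _) g hg
    (by filter_upwards [hA] with ω h using subset_convexHull _ _ ⟨ω, h, rfl⟩)
  obtain ⟨ι, _, z, w, hz, haff, hw, hw1, hsum⟩ := eq_pos_convex_span_of_mem_convexHull h1
  choose p hpA hpz using fun i => hz (Set.mem_range_self i)
  refine ⟨∑ i, ENNReal.ofReal (w i) • Measure.dirac (p i), ⟨?_⟩, ⟨Finset.univ.image p, ?_, ?_, ?_⟩, ?_⟩
  · simp only [Measure.finsetSum_apply, Measure.smul_apply, measure_univ, smul_eq_mul, mul_one]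
    rw [← ENNReal.ofReal_sum_of_nonneg (fun i _ => (hw i).le), hw1, ENNReal.ofReal_one]
  · intro x hx
    simp at hx
    obtain ⟨i, rfl⟩ := hx
    exact hpA i
  · refine Finset.card_image_le.trans ?_
    rw [Finset.card_univ]
    refine haff.card_le_finrank_succ.trans ?_
    gcongr
    exact Submodule.finrank_le _
  · simp
  · rw [integral_finsetSum_measure]
    · rw [← hsum]
      refine Finset.sum_congr rfl fun i _ => ?_
      rw [integral_smul_measure, integral_dirac, hpz, ENNReal.toReal_ofReal (hw i).le]
    · intro i _
      exact (integrable_dirac (by simp)).smul_measure (by simp)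

/-- The coordinate process is a martingale under `μ` in its natural filtration. -/
def MtMart (n T : ℕ) (μ : Measure (Fin (T + 1) → Fin n → ℝ)) : Prop :=
  Martingale (fun t (π : Fin (T + 1) → Fin n → ℝ) => π t)
      (Filtration.natural (fun t (π : Fin (T + 1) → Fin n → ℝ) => π t)
        fun t => (measurable_pi_apply t).stronglyMeasurable) μ

/-- The natural sigma-algebra. -/
@[reducible] def mtNat (n T : ℕ) (s : Fin (T + 1)) : MeasurableSpace (Fin (T + 1) → Fin n → ℝ) :=
  ⨆ j ≤ s, MeasurableSpace.comap (fun π : Fin (T + 1) → Fin n → ℝ => π j) inferInstance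

theorem mtNat_le (n T : ℕ) (s : Fin (T + 1)) : mtNat n T s ≤ MeasurableSpace.pi :=
  iSup₂_le fun j _ => (measurable_pi_apply j).comap_le

theorem mtMart_iff (n T : ℕ) (μ : Measure (Fin (T + 1) → Fin n → ℝ)) [IsProbabilityMeasure μ] :
    MtMart n T μ ↔ (∀ t, Integrable (fun π : Fin (T + 1) → Fin n → ℝ => π t) μ) ∧
      ∀ s t, s ≤ t → ∀ B, MeasurableSet[mtNat n T s] B →
        ∫ π in B, π s ∂μ = ∫ π in B, π t ∂μ := by
  constructor
  · intro h
    refine ⟨fun t => Martingale.integrable h t, fun s t hst B hB => ?_⟩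
    exact Martingale.setIntegral_eq h hst (by
      rw [Filtration.natural]; exact hB)
  · rintro ⟨h1, h2⟩
    have had := Filtration.stronglyAdapted_natural (β := fun _ => Fin n → ℝ)
      (u := fun t (π : Fin (T + 1) → Fin n → ℝ) => π t)
      (fun t => (measurable_pi_apply t).stronglyMeasurable)
    refine ⟨had, fun s t hst => ?_⟩
    refine (ae_eq_condExp_of_forall_setIntegral_eq (mtNat_le n T s) (h1 t) (fun _ _ _ => (h1 s).integrableOn)
      (fun B hB _ => h2 s t hst B hB) (had s).aestronglyMeasurable).symm

/-- Restriction of a path to all but the last time. -/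
def mtIni {n T : ℕ} (π : Fin (T + 2) → Fin n → ℝ) : Fin (T + 1) → Fin n → ℝ :=
  fun i => π i.castSucc

/-- Extension of a path by one step. -/
def mtSn {n T : ℕ} (q : (Fin (T + 1) → Fin n → ℝ) × (Fin n → ℝ)) : Fin (T + 2) → Fin n → ℝ :=
  Fin.snoc (α := fun _ => Fin n → ℝ) q.1 q.2

@[simp] theorem mtSn_castSucc {n T : ℕ} (q : (Fin (T + 1) → Fin n → ℝ) × (Fin n → ℝ))
    (i : Fin (T + 1)) : mtSn q i.castSucc = q.1 i := by
  simp [mtSn]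

@[simp] theorem mtSn_last {n T : ℕ} (q : (Fin (T + 1) → Fin n → ℝ) × (Fin n → ℝ)) :
    mtSn q (Fin.last (T + 1)) = q.2 := by
  simp [mtSn]

@[simp] theorem mtSn_zero {n T : ℕ} (q : (Fin (T + 1) → Fin n → ℝ) × (Fin n → ℝ)) :
    mtSn q 0 = q.1 0 := mtSn_castSucc q 0

@[simp] theorem mtIni_mtSn {n T : ℕ} (q : (Fin (T + 1) → Fin n → ℝ) × (Fin n → ℝ)) :
    mtIni (mtSn q) = q.1 := by
  ext i; simp [mtIni]

theorem measurable_mtIni {n T : ℕ} : Measurable (mtIni (n := n) (T := T)) :=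
  measurable_pi_iff.2 fun i => measurable_pi_apply i.castSucc

theorem measurable_mtSn {n T : ℕ} : Measurable (mtSn (n := n) (T := T)) := by
  refine measurable_pi_iff.2 fun i => ?_
  induction i using Fin.lastCases with
  | last => simpa using measurable_snd
  | cast i =>
    simp only [mtSn_castSucc]
    exact (measurable_pi_apply i).comp measurable_fst

theorem mtSn_ini {n T : ℕ} (π : Fin (T + 2) → Fin n → ℝ) :
    mtSn (mtIni π, π (Fin.last (T + 1))) = π := by
  funext i
  induction i using Fin.lastCases with
  | last => simp
  | cast i => simp [mtIni]

theorem mtNat_castSucc (n T : ℕ) (s : Fin (T + 1)) :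
    mtNat n (T + 1) s.castSucc = MeasurableSpace.comap mtIni (mtNat n T s) := by
  simp only [mtNat, MeasurableSpace.comap_iSup, MeasurableSpace.comap_comp]
  apply le_antisymm
  · refine iSup₂_le fun j hj => ?_
    have hj' : j ≠ Fin.last (T + 1) := by
      rintro rfl
      exact absurd hj (not_le.2 (Fin.castSucc_lt_last s))
    obtain ⟨i, rfl⟩ := Fin.exists_castSucc_eq.2 hj'
    exact le_iSup₂_of_le i (Fin.castSucc_le_castSucc_iff.1 hj) le_rfl
  · refine iSup₂_le fun j hj => ?_
    exact le_iSup₂_of_le j.castSucc (Fin.castSucc_le_castSucc_iff.2 hj) le_rfl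

theorem mtNat_last (n T : ℕ) : mtNat n T (Fin.last T) = MeasurableSpace.pi := by
  apply le_antisymm (mtNat_le _ _ _)
  exact iSup_le fun j => le_iSup₂_of_le j (Fin.le_last j) le_rfl

theorem mt_map_ini (n T : ℕ) (μ : Measure (Fin (T + 1) → Fin n → ℝ)) [IsProbabilityMeasure μ]
    (κ : ProbabilityTheory.Kernel (Fin (T + 1) → Fin n → ℝ) (Fin n → ℝ))
    [ProbabilityTheory.IsMarkovKernel κ] :
    ((μ.compProd κ).map mtSn).map mtIni = μ := by
  rw [Measure.map_map measurable_mtIni measurable_mtSn]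
  have : (mtIni ∘ mtSn : (Fin (T + 1) → Fin n → ℝ) × (Fin n → ℝ) → _) = Prod.fst := by
    funext q; simp
  rw [this]
  exact Measure.fst_compProd μ κ

theorem mt_setInt_ini (n T : ℕ) (μ : Measure (Fin (T + 1) → Fin n → ℝ)) [IsProbabilityMeasure μ]
    (κ : ProbabilityTheory.Kernel (Fin (T + 1) → Fin n → ℝ) (Fin n → ℝ))
    [ProbabilityTheory.IsMarkovKernel κ] (B : Set (Fin (T + 1) → Fin n → ℝ))
    (hB : MeasurableSet B) (t : Fin (T + 1)) :
    ∫ π in mtIni ⁻¹' B, π t.castSucc ∂((μ.compProd κ).map mtSn) = ∫ p in B, p t ∂μ := by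
  conv_rhs => rw [← mt_map_ini n T μ κ]
  rw [setIntegral_map hB (measurable_pi_apply t).aestronglyMeasurable measurable_mtIni.aemeasurable]
  rfl

theorem mt_setInt_last (n T : ℕ) (μ : Measure (Fin (T + 1) → Fin n → ℝ)) [IsProbabilityMeasure μ]
    (κ : ProbabilityTheory.Kernel (Fin (T + 1) → Fin n → ℝ) (Fin n → ℝ))
    [ProbabilityTheory.IsMarkovKernel κ] (B : Set (Fin (T + 1) → Fin n → ℝ))
    (hB : MeasurableSet B) (hi : Integrable (fun q => q.2) (μ.compProd κ)) :
    ∫ π in mtIni ⁻¹' B, π (Fin.last (T + 1)) ∂((μ.compProd κ).map mtSn)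
      = ∫ p in B, ∫ x, x ∂(κ p) ∂μ := by
  rw [setIntegral_map (measurable_mtIni hB) (measurable_pi_apply _).aestronglyMeasurable
    measurable_mtSn.aemeasurable]
  have : mtSn ⁻¹' (mtIni ⁻¹' B) = B ×ˢ (Set.univ : Set (Fin n → ℝ)) := by
    ext q; simp
  rw [this]
  simp only [mtSn_last]
  rw [Measure.setIntegral_compProd hB MeasurableSet.univ hi.integrableOn]
  simp

theorem mt_inner_int {α β E : Type*} [MeasurableSpace α] [MeasurableSpace β]
    [NormedAddCommGroup E] [NormedSpace ℝ E] (μ : Measure α) [IsProbabilityMeasure μ]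
    (κ : ProbabilityTheory.Kernel α β) [ProbabilityTheory.IsMarkovKernel κ] (f : α × β → E)
    (hf : Integrable f (μ.compProd κ)) : Integrable (fun a => ∫ b, f (a, b) ∂(κ a)) μ := by
  rw [Measure.compProd] at hf
  simpa using hf.integral_compProd

theorem mtMart_step (n T : ℕ) (μ : Measure (Fin (T + 1) → Fin n → ℝ)) [IsProbabilityMeasure μ]
    (κ : ProbabilityTheory.Kernel (Fin (T + 1) → Fin n → ℝ) (Fin n → ℝ))
    [ProbabilityTheory.IsMarkovKernel κ] :
    MtMart n (T + 1) ((μ.compProd κ).map mtSn) ↔ MtMart n T μ ∧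
      Integrable (fun q => q.2) (μ.compProd κ) ∧ ∀ᵐ p ∂μ, ∫ x, x ∂(κ p) = p (Fin.last T) := by
  have : IsProbabilityMeasure ((μ.compProd κ).map mtSn) :=
    Measure.isProbabilityMeasure_map measurable_mtSn.aemeasurable
  have hsnd : Integrable (fun π : Fin (T + 2) → Fin n → ℝ => π (Fin.last (T + 1)))
      ((μ.compProd κ).map mtSn) ↔ Integrable (fun q => q.2) (μ.compProd κ) := by
    rw [integrable_map_measure (measurable_pi_apply _).aestronglyMeasurable
      measurable_mtSn.aemeasurable]
    apply iff_of_eq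
    congr 1
    funext q
    simp
  have hfst : ∀ t : Fin (T + 1), Integrable (fun π : Fin (T + 2) → Fin n → ℝ => π t.castSucc)
      ((μ.compProd κ).map mtSn) ↔ Integrable (fun p : Fin (T + 1) → Fin n → ℝ => p t) μ := by
    intro t
    conv_rhs => rw [← mt_map_ini n T μ κ]
    rw [integrable_map_measure (measurable_pi_apply _).aestronglyMeasurable
      measurable_mtIni.aemeasurable]
    rfl
  rw [mtMart_iff, mtMart_iff]
  constructor
  · rintro ⟨h1, h2⟩
    have hi := hsnd.1 (h1 _)
    refine ⟨⟨fun t => (hfst t).1 (h1 _), ?_⟩, hi, ?_⟩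
    · intro s t hst B hB
      have hBm := mtNat_le n T s B hB
      rw [← mt_setInt_ini n T μ κ B hBm, ← mt_setInt_ini n T μ κ B hBm]
      refine h2 _ _ (Fin.castSucc_le_castSucc_iff.2 hst) _ ?_
      rw [mtNat_castSucc]
      exact ⟨B, hB, rfl⟩
    · refine Integrable.ae_eq_of_forall_setIntegral_eq _ _ (mt_inner_int μ κ _ hi)
        ((hfst _).1 (h1 _)) fun B hB _ => ?_
      rw [← mt_setInt_last n T μ κ B hB hi, ← mt_setInt_ini n T μ κ B hB]
      refine (h2 _ _ (Fin.le_last _) _ ?_).symm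
      rw [mtNat_castSucc, mtNat_last]
      exact ⟨B, hB, rfl⟩
  · rintro ⟨⟨h1, h2⟩, hi, hm⟩
    constructor
    · intro t
      induction t using Fin.lastCases with
      | last => exact hsnd.2 hi
      | cast t => exact (hfst t).2 (h1 t)
    · intro s t hst B hB
      induction s using Fin.lastCases with
      | last => rw [Fin.last_le_iff.1 hst]
      | cast s =>
        rw [mtNat_castSucc] at hB
        obtain ⟨B, hB, rfl⟩ := hB
        have hBm := mtNat_le n T s B hB
        rw [mt_setInt_ini n T μ κ B hBm]
        induction t using Fin.lastCases with
        | last =>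
          rw [mt_setInt_last n T μ κ B hBm hi, h2 s _ (Fin.le_last s) B hB]
          refine setIntegral_congr_ae hBm ?_
          filter_upwards [hm] with p hp _ using hp.symm
        | cast t =>
          rw [mt_setInt_ini n T μ κ B hBm]
          exact h2 s t (Fin.castSucc_le_castSucc_iff.1 hst) B hB

theorem mt_integrable_finite {Ω : Type*} [MeasurableSpace Ω] (m : Measure Ω) [IsFiniteMeasure m]
    {E : Type*} [NormedAddCommGroup E] (h : Ω → E) (hh : AEStronglyMeasurable h m) (S : Finset Ω)
    (hS : m (↑S : Set Ω)ᶜ = 0) : Integrable h m := by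
  refine Integrable.of_bound hh (∑ x ∈ S, ‖h x‖) ?_
  have : ∀ᵐ x ∂m, x ∈ (↑S : Set Ω) := hS
  filter_upwards [this] with x hx
  exact Finset.single_le_sum (f := fun x => ‖h x‖) (fun _ _ => norm_nonneg _) hx

theorem mt_disint (n T : ℕ) (μ : Measure (Fin (T + 2) → Fin n → ℝ)) [IsProbabilityMeasure μ] :
    ∃ (μ' : Measure (Fin (T + 1) → Fin n → ℝ))
      (κ : ProbabilityTheory.Kernel (Fin (T + 1) → Fin n → ℝ) (Fin n → ℝ)),
      IsProbabilityMeasure μ' ∧ ProbabilityTheory.IsMarkovKernel κ ∧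
        μ = (μ'.compProd κ).map mtSn := by
  have hmeas : Measurable (fun π : Fin (T + 2) → Fin n → ℝ => (mtIni π, π (Fin.last (T + 1)))) :=
    measurable_mtIni.prodMk (measurable_pi_apply _)
  let l := μ.map (fun π : Fin (T + 2) → Fin n → ℝ => (mtIni π, π (Fin.last (T + 1))))
  have : IsProbabilityMeasure l := Measure.isProbabilityMeasure_map hmeas.aemeasurable
  refine ⟨l.fst, l.condKernel, inferInstance, inferInstance, ?_⟩
  rw [Measure.disintegrate l l.condKernel]
  rw [Measure.map_map measurable_mtSn hmeas]
  have : (mtSn ∘ fun π : Fin (T + 2) → Fin n → ℝ => (mtIni π, π (Fin.last (T + 1)))) = id := by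
    funext π
    exact mtSn_ini π
  rw [this, Measure.map_id]

theorem mt_main (k n T : ℕ) : ∀ (x₀ : Fin n → ℝ)
    (μ : Measure (Fin (T + 1) → Fin n → ℝ)) (_ : IsProbabilityMeasure μ)
    (_ : MtMart n T μ) (_ : ∀ᵐ π ∂μ, π 0 = x₀)
    (A : Set (Fin (T + 1) → Fin n → ℝ)) (_ : MeasurableSet A) (_ : ∀ᵐ π ∂μ, π ∈ A)
    (f : (Fin (T + 1) → Fin n → ℝ) → Fin k → ℝ) (_ : Measurable f)
    (_ : Integrable f μ),
    ∃ ν : Measure (Fin (T + 1) → Fin n → ℝ), IsProbabilityMeasure ν ∧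
      MtMart n T ν ∧
      (∀ᵐ π ∂ν, π 0 = x₀) ∧
      (∃ S : Finset (Fin (T + 1) → Fin n → ℝ),
        ↑S ⊆ A ∧ S.card ≤ (n + k + 1) ^ T ∧ ν ((↑S : Set (Fin (T + 1) → Fin n → ℝ))ᶜ) = 0) ∧
      ∫ π, f π ∂ν = ∫ π, f π ∂μ := by
  classical
  induction T with
  | zero =>
    intro x₀ μ _ hm h0 A hA hA1 f hf hfi
    have hc : ∀ π : Fin (0 + 1) → Fin n → ℝ, π 0 = x₀ → π = fun _ => x₀ := by
      intro π h
      funext i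
      have hi : i = 0 := by
        apply Fin.ext
        have := i.isLt
        simp
      rw [hi, h]
    refine ⟨μ, inferInstance, hm, h0, ⟨{fun _ => x₀}, ?_, by simp, ?_⟩, rfl⟩
    · obtain ⟨π, h1, h2⟩ := (h0.and hA1).exists
      rw [hc π h1] at h2
      simpa using h2
    · change ∀ᵐ π ∂μ, π ∈ (↑({fun _ => x₀} : Finset (Fin (0 + 1) → Fin n → ℝ)) : Set _)
      filter_upwards [h0] with π h
      simp [hc π h]
  | succ T ih =>
    intro x₀ μ _ hm h0 A hA hA1 f hf hfi
    obtain ⟨μ', κ, _, _, rfl⟩ := mt_disint n T μ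
    obtain ⟨hm', hint, hmean⟩ := (mtMart_step n T μ' κ).1 hm
    have hfi' : Integrable (fun q => f (mtSn q)) (μ'.compProd κ) :=
      (integrable_map_measure hf.aestronglyMeasurable measurable_mtSn.aemeasurable).1 hfi
    have hfs : Measurable (fun q : (Fin (T + 1) → Fin n → ℝ) × (Fin n → ℝ) => f (mtSn q)) :=
      hf.comp measurable_mtSn
    have hg1 := ((Measure.integrable_compProd_iff hint.aestronglyMeasurable).1 hint).1
    have hg2 := ((Measure.integrable_compProd_iff hfi'.aestronglyMeasurable).1 hfi').1
    have hg3 := Measure.ae_ae_of_ae_compProd (ae_of_ae_map measurable_mtSn.aemeasurable hA1)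
    have hg4 := Measure.ae_ae_of_ae_compProd (ae_of_ae_map measurable_mtSn.aemeasurable h0)
    have h0' : ∀ᵐ p ∂μ', p 0 = x₀ := by
      filter_upwards [hg4] with p hp
      obtain ⟨x, hx⟩ := hp.exists
      simpa using hx
    have hgood := hg1.and (hmean.and (hg2.and hg3))
    obtain ⟨G, hG, hGm, hGs⟩ := exists_measurable_superset_of_null (ae_iff.1 hgood)
    have hGg : ∀ p, p ∉ G → _ := fun p hp => not_not.1 (fun h => hp (hG h))
    obtain ⟨ν', _, hν'm, hν'0, ⟨S', hS'G, hS'c, hS'n⟩, hν'f⟩ := ih x₀ μ' inferInstance hm' h0'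
      Gᶜ hGm.compl (measure_eq_zero_iff_ae_notMem.1 hGs) (fun p => ∫ x, f (mtSn (p, x)) ∂(κ p))
      (hfs.stronglyMeasurable.integral_kernel_prod_right').measurable (mt_inner_int μ' κ _ hfi')
    have hS'ae : ∀ᵐ p ∂ν', p ∈ S' := hS'n
    have hex : ∀ p, ∃ (ρ : Measure (Fin n → ℝ)) (S : Finset (Fin n → ℝ)),
        IsProbabilityMeasure ρ ∧ S.card ≤ n + k + 1 ∧ ρ (↑S : Set (Fin n → ℝ))ᶜ = 0 ∧
        (p ∉ S' → ρ = Measure.dirac 0) ∧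
        (p ∈ S' → (∀ x ∈ S, mtSn (p, x) ∈ A) ∧ ∫ x, x ∂ρ = p (Fin.last T) ∧
          ∫ x, f (mtSn (p, x)) ∂ρ = ∫ x, f (mtSn (p, x)) ∂(κ p)) := by
      intro p
      by_cases hp : p ∈ S'
      · obtain ⟨c1, c2, c3, c4⟩ := hGg p (hS'G hp)
        obtain ⟨ρ, hρ, ⟨S, hSA, hSc, hSn⟩, hρi⟩ := mt_tchakaloff (κ p) {x | mtSn (p, x) ∈ A}
          (fun x => (x, f (mtSn (p, x)))) (c1.prodMk c3) c4
        have i1 : Integrable (fun x : Fin n → ℝ => x) ρ :=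
          mt_integrable_finite ρ _ measurable_id.aestronglyMeasurable S hSn
        have i2 : Integrable (fun x : Fin n → ℝ => f (mtSn (p, x))) ρ :=
          mt_integrable_finite ρ _ (hfs.comp measurable_prodMk_left).aestronglyMeasurable S hSn
        have e1 := congrArg Prod.fst hρi
        have e2 := congrArg Prod.snd hρi
        rw [fst_integral (i1.prodMk i2), fst_integral (c1.prodMk c3)] at e1
        rw [snd_integral (i1.prodMk i2), snd_integral (c1.prodMk c3)] at e2
        refine ⟨ρ, S, hρ, ?_, hSn, fun h => absurd hp h, fun _ => ⟨fun x hx => hSA hx, ?_, e2⟩⟩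
        · simpa using hSc
        · exact e1.trans c2
      · exact ⟨Measure.dirac 0, {0}, inferInstance, by simp, by simp, fun _ => rfl,
          fun h => absurd h hp⟩
    choose ρ S hρp hSc hSn hρd hρ using hex
    let κ' : ProbabilityTheory.Kernel (Fin (T + 1) → Fin n → ℝ) (Fin n → ℝ) :=
      ⟨ρ, (measurable_const (a := Measure.dirac (0 : Fin n → ℝ))).measurable_of_countable_ne
        (S'.finite_toSet.subset (fun p hp => by
          by_contra h
          exact hp (hρd p h).symm)).countable⟩
    have hκ' : ∀ p, κ' p = ρ p := fun _ => rfl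
    have : ProbabilityTheory.IsMarkovKernel κ' := ⟨hρp⟩
    let R : Finset (Fin (T + 2) → Fin n → ℝ) :=
      S'.biUnion fun p => (S p).image fun x => mtSn (p, x)
    have hRm : MeasurableSet (↑R : Set (Fin (T + 2) → Fin n → ℝ)) := R.measurableSet
    have hprob : IsProbabilityMeasure ((ν'.compProd κ').map mtSn) :=
      Measure.isProbabilityMeasure_map measurable_mtSn.aemeasurable
    have hRae : ∀ᵐ π ∂((ν'.compProd κ').map mtSn), π ∈ (↑R : Set (Fin (T + 2) → Fin n → ℝ)) := by
      refine (ae_map_iff measurable_mtSn.aemeasurable hRm).2 ?_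
      refine Measure.ae_compProd_of_ae_ae (measurable_mtSn hRm) ?_
      filter_upwards [hS'ae] with p hp
      have hx : ∀ᵐ x ∂(κ' p), x ∈ (↑(S p) : Set (Fin n → ℝ)) := hSn p
      filter_upwards [hx] with x hx
      change mtSn (p, x) ∈ R
      exact Finset.mem_biUnion.2 ⟨p, hp, Finset.mem_image.2 ⟨x, hx, rfl⟩⟩
    have hRn : ((ν'.compProd κ').map mtSn) (↑R : Set (Fin (T + 2) → Fin n → ℝ))ᶜ = 0 := hRae
    have hfν : Integrable f ((ν'.compProd κ').map mtSn) :=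
      mt_integrable_finite _ _ hf.aestronglyMeasurable R hRn
    refine ⟨(ν'.compProd κ').map mtSn, hprob, ?_, ?_, ⟨R, ?_, ?_, hRn⟩, ?_⟩
    · refine (mtMart_step n T ν' κ').2 ⟨hν'm, ?_, ?_⟩
      · have := mt_integrable_finite ((ν'.compProd κ').map mtSn)
          (fun π => π (Fin.last (T + 1))) (measurable_pi_apply _).aestronglyMeasurable R hRn
        have := (integrable_map_measure (measurable_pi_apply _).aestronglyMeasurable
          measurable_mtSn.aemeasurable).1 this
        refine this.congr (ae_of_all _ fun q => ?_)
        simp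
      · filter_upwards [hS'ae] with p hp
        exact (hρ p hp).2.1
    · refine (ae_map_iff measurable_mtSn.aemeasurable
        (measurableSet_eq_fun (measurable_pi_apply 0) measurable_const)).2 ?_
      refine Measure.ae_compProd_of_ae_ae (measurable_mtSn
        (measurableSet_eq_fun (measurable_pi_apply 0) measurable_const)) ?_
      filter_upwards [hν'0] with p hp
      exact ae_of_all _ fun x => by simpa using hp
    · intro π hπ
      obtain ⟨p, hp, hπ⟩ := Finset.mem_biUnion.1 (Finset.mem_coe.1 hπ)
      obtain ⟨x, hx, rfl⟩ := Finset.mem_image.1 hπ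
      exact (hρ p hp).1 x hx
    · refine (Finset.card_biUnion_le_card_mul _ _ (n + k + 1)
        (fun p _ => Finset.card_image_le.trans (hSc p))).trans ?_
      rw [pow_succ]
      gcongr
    · have hfν' : Integrable (fun q => f (mtSn q)) (ν'.compProd κ') :=
        (integrable_map_measure hf.aestronglyMeasurable measurable_mtSn.aemeasurable).1 hfν
      rw [integral_map measurable_mtSn.aemeasurable hf.aestronglyMeasurable,
        integral_map measurable_mtSn.aemeasurable hf.aestronglyMeasurable,
        Measure.integral_compProd hfi', ← hν'f, Measure.integral_compProd hfν']
      refine integral_congr_ae ?_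
      filter_upwards [hS'ae] with p hp
      exact (hρ p hp).2.2

/-- Tchakaloff's theorem for martingales: if `μ` is a martingale law
on `(ℝⁿ)^{T+1}` starting at `x₀`, `A` is a Borel set of full `μ`-measure, and
`f : (ℝⁿ)^{T+1} → ℝᵏ` is Borel measurable and `μ`-integrable, then there is a martingale
law `ν` starting at `x₀`, supported on a finite subset `S ⊆ A` with
`card S ≤ (n+k+1)^T`, such that `∫ f dν = ∫ f dμ`. -/
theorem martingale_tchakaloff (k n T : ℕ) (x₀ : Fin n → ℝ)
    (μ : Measure (Fin (T + 1) → Fin n → ℝ)) [IsProbabilityMeasure μ]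
    (hmart : Martingale (fun t (π : Fin (T + 1) → Fin n → ℝ) => π t)
      (Filtration.natural (fun t (π : Fin (T + 1) → Fin n → ℝ) => π t)
        fun t => (measurable_pi_apply t).stronglyMeasurable) μ)
    (h0 : ∀ᵐ π ∂μ, π 0 = x₀)
    (A : Set (Fin (T + 1) → Fin n → ℝ)) (hAm : MeasurableSet A) (hA1 : μ A = 1)
    (f : (Fin (T + 1) → Fin n → ℝ) → Fin k → ℝ) (hfm : Measurable f)
    (hfi : Integrable f μ) :
    ∃ ν : Measure (Fin (T + 1) → Fin n → ℝ), IsProbabilityMeasure ν ∧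
      Martingale (fun t (π : Fin (T + 1) → Fin n → ℝ) => π t)
        (Filtration.natural (fun t (π : Fin (T + 1) → Fin n → ℝ) => π t)
          fun t => (measurable_pi_apply t).stronglyMeasurable) ν ∧
      (∀ᵐ π ∂ν, π 0 = x₀) ∧
      (∃ S : Finset (Fin (T + 1) → Fin n → ℝ),
        ↑S ⊆ A ∧ S.card ≤ (n + k + 1) ^ T ∧ ν ((↑S : Set (Fin (T + 1) → Fin n → ℝ))ᶜ) = 0) ∧
      ∫ π, f π ∂ν = ∫ π, f π ∂μ := by
  refine mt_main k n T x₀ μ inferInstance hmart h0 A hAm ?_ f hfm hfi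
  exact (prob_compl_eq_zero_iff hAm).2 hA1
end
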